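/- arXiv:1307.6708 — 4 statements merged into one kernel-verified Lean document; each statement's English description precedes it below -/
import Mathlib

section
/- Let G be a finite simple graph with no isolated vertices, let c₄(G) be the number of subgraphs of G isomorphic to the 4-cycle C₄ and k₄(G) the number of subgraphs isomorphic to the complete graph K₄. Then the edge polytope P(G) has f₀(P(G)) = e(G) vertices and f₁(P(G)) = C(e(G),2) − 2·c₄(G) + 3·k₄(G) edges. -/
open Set

/-- The edge polytope of a graph `G` on the vertex set `Fin n`. -/
def edgePolytope {n : ℕ} (G : SimpleGraph (Fin n)) : Set (Fin n → ℝ) :=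
  convexHull ℝ {x | ∃ i j : Fin n, G.Adj i j ∧ x = Pi.single i 1 + Pi.single j 1}

/-- The dimension of a polytope: the dimension of its affine hull. -/
noncomputable def polyDim {n : ℕ} (P : Set (Fin n → ℝ)) : ℕ :=
  Module.finrank ℝ (vectorSpan ℝ P)

/-- `faceCount P k` is the number of (nonempty) `k`-dimensional faces of `P`,
a face being the intersection of `P` with a supporting hyperplane (`IsExposed`). -/
noncomputable def faceCount {n : ℕ} (P : Set (Fin n → ℝ)) (k : ℕ) : ℕ :=
  {F : Set (Fin n → ℝ) | IsExposed ℝ P F ∧ F.Nonempty ∧ polyDim F = k}.ncard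

/-- The number of subgraphs of `G` isomorphic to a fixed graph `F`. -/
noncomputable def copyCount {n m : ℕ} (G : SimpleGraph (Fin n))
    (F : SimpleGraph (Fin m)) : ℕ :=
  Nat.card {H : G.Subgraph // Nonempty (H.coe ≃g F)}

namespace SimpleGraph

/-- An injective homomorphism is the same as a subgraph of the target together with an isomorphism
onto it. -/
noncomputable def copyEquivSigmaIso {V W : Type*} (F : SimpleGraph V) (G : SimpleGraph W) :
    {f : V → W // Function.Injective f ∧ ∀ i j, F.Adj i j → G.Adj (f i) (f j)} ≃
      Σ H : {H : G.Subgraph // Nonempty (H.coe ≃g F)}, (F ≃g H.1.coe) :=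
  Equiv.symm <| Equiv.ofBijective
    (fun p ↦ ⟨fun v ↦ (p.2 v : W),
      Subtype.val_injective.comp p.2.injective,
      fun i j h ↦ p.1.1.coe_adj_sub _ _ (p.2.map_adj_iff.2 h)⟩) <| by
    constructor
    · rintro ⟨⟨H, hH⟩, φ⟩ ⟨⟨K, hK⟩, ψ⟩ h
      have h' : ∀ v, (φ v : W) = ψ v := fun v ↦ congrFun (congrArg Subtype.val h) v
      have hHK : H = K := by
        ext x y
        · constructor
          · intro hx
            obtain ⟨v, hv⟩ := φ.surjective ⟨x, hx⟩
            have := h' v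
            rw [hv] at this
            exact (show x = _ from this) ▸ (ψ v).2
          · intro hx
            obtain ⟨v, hv⟩ := ψ.surjective ⟨x, hx⟩
            have := h' v
            rw [hv] at this
            exact (show _ = x from this) ▸ (φ v).2
        · constructor
          · intro hx
            obtain ⟨v, hv⟩ := φ.surjective ⟨x, hx.fst_mem⟩
            obtain ⟨w, hw⟩ := φ.surjective ⟨y, hx.snd_mem⟩
            have h1 := h' v
            have h2 := h' w
            have h3 : H.coe.Adj (φ v) (φ w) := by rw [hv, hw]; exact hx
            have h4 : K.coe.Adj (ψ v) (ψ w) := ψ.map_adj_iff.2 (φ.map_adj_iff.1 h3)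
            rw [hv] at h1
            rw [hw] at h2
            simpa [← h1, ← h2] using h4
          · intro hx
            obtain ⟨v, hv⟩ := ψ.surjective ⟨x, hx.fst_mem⟩
            obtain ⟨w, hw⟩ := ψ.surjective ⟨y, hx.snd_mem⟩
            have h1 := h' v
            have h2 := h' w
            have h3 : K.coe.Adj (ψ v) (ψ w) := by rw [hv, hw]; exact hx
            have h4 : H.coe.Adj (φ v) (φ w) := φ.map_adj_iff.2 (ψ.map_adj_iff.1 h3)
            rw [hv] at h1
            rw [hw] at h2
            simpa [h1, h2] using h4
      subst hHK
      congr
      ext v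
      exact h' v
    · rintro ⟨f, hf, hadj⟩
      let c : Copy F G := ⟨⟨f, hadj _ _⟩, hf⟩
      exact ⟨⟨⟨c.toSubgraph, ⟨c.isoToSubgraph.symm⟩⟩, c.isoToSubgraph⟩, rfl⟩

lemma card_injective_hom_eq_copyCount_mul {n m : ℕ} (F : SimpleGraph (Fin m))
    (G : SimpleGraph (Fin n)) :
    Nat.card {f : Fin m → Fin n // Function.Injective f ∧ ∀ i j, F.Adj i j → G.Adj (f i) (f j)} =
      _root_.copyCount G F * Nat.card (F ≃g F) := by
  classical
  rw [Nat.card_congr (copyEquivSigmaIso F G)]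
  have : ∀ H : G.Subgraph, Finite (F ≃g H.coe) := fun H ↦
    Finite.of_injective (fun φ : F ≃g H.coe ↦ (φ : Fin m → H.verts)) DFunLike.coe_injective
  have : Fintype {H : G.Subgraph // Nonempty (H.coe ≃g F)} := Fintype.ofFinite _
  rw [Nat.card_sigma, Finset.sum_congr rfl (g := fun _ ↦ Nat.card (F ≃g F))]
  · simp [_root_.copyCount, Nat.card_eq_fintype_card]
  · rintro ⟨H, ⟨φ⟩⟩ -
    exact Nat.card_congr
      ⟨fun ψ ↦ ψ.trans φ, fun ψ ↦ ψ.trans φ.symm, fun ψ ↦ by ext; simp, fun ψ ↦ by ext; simp⟩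

lemma card_iso_self_eq_card_perm {m : ℕ} (F : SimpleGraph (Fin m)) [DecidableRel F.Adj] :
    Nat.card (F ≃g F) =
      Fintype.card {σ : Equiv.Perm (Fin m) // ∀ i j, F.Adj (σ i) (σ j) ↔ F.Adj i j} := by
  rw [← Nat.card_eq_fintype_card]
  exact Nat.card_congr ⟨fun φ ↦ ⟨φ.toEquiv, fun _ _ ↦ φ.map_adj_iff⟩,
    fun σ ↦ ⟨σ.1, fun {a b} ↦ σ.2 a b⟩, fun _ ↦ rfl, fun _ ↦ rfl⟩

lemma card_iso_self_cycleGraph_four : Nat.card (cycleGraph 4 ≃g cycleGraph 4) = 8 := by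
  rw [card_iso_self_eq_card_perm]
  decide +kernel

lemma card_iso_self_top_four :
    Nat.card ((⊤ : SimpleGraph (Fin 4)) ≃g (⊤ : SimpleGraph (Fin 4))) = 24 := by
  rw [card_iso_self_eq_card_perm]
  decide +kernel

variable {n : ℕ}

/-- `f 0`, `f 1` and `f 2`, `f 3` are the ends of two disjoint edges which together with some
other two edges form a 4-cycle of `G`. -/
def IsOppositePair (G : SimpleGraph (Fin n)) (f : Fin 4 → Fin n) : Prop :=
  Function.Injective f ∧ G.Adj (f 0) (f 1) ∧ G.Adj (f 2) (f 3) ∧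
    (G.Adj (f 0) (f 2) ∧ G.Adj (f 1) (f 3) ∨ G.Adj (f 0) (f 3) ∧ G.Adj (f 1) (f 2))

/-- The two edges joining `f 0` to `f 1` and `f 2` to `f 3`. -/
def edgePair (f : Fin 4 → Fin n) : Finset (Sym2 (Fin n)) := {s(f 0, f 1), s(f 2, f 3)}

lemma injective_fin_four_iff {α : Type*} (f : Fin 4 → α) : Function.Injective f ↔
    f 0 ≠ f 1 ∧ f 0 ≠ f 2 ∧ f 0 ≠ f 3 ∧ f 1 ≠ f 2 ∧ f 1 ≠ f 3 ∧ f 2 ≠ f 3 := by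
  constructor
  · intro h
    simp [h.eq_iff]
  · rintro ⟨h1, h2, h3, h4, h5, h6⟩ i j hij
    fin_cases i <;> fin_cases j <;> simp_all

lemma cycleGraph_four_hom_iff (G : SimpleGraph (Fin n)) (f : Fin 4 → Fin n) :
    (∀ i j, (cycleGraph 4).Adj i j → G.Adj (f i) (f j)) ↔
      G.Adj (f 0) (f 1) ∧ G.Adj (f 1) (f 2) ∧ G.Adj (f 2) (f 3) ∧ G.Adj (f 0) (f 3) := by
  constructor
  · intro h
    exact ⟨h _ _ (by decide), h _ _ (by decide), h _ _ (by decide), h _ _ (by decide)⟩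
  · rintro ⟨h1, h2, h3, h4⟩ i j hij
    fin_cases i <;> fin_cases j <;>
      first
        | exact absurd hij (by decide)
        | assumption
        | exact Adj.symm (by assumption)

open Classical in
lemma card_isOppositePair (G : SimpleGraph (Fin n)) :
    (Finset.univ.filter (IsOppositePair G)).card + 24 * _root_.copyCount G (⊤ : SimpleGraph (Fin 4))
      = 16 * _root_.copyCount G (cycleGraph 4) := by
  have hC := card_injective_hom_eq_copyCount_mul (cycleGraph 4) G
  have hK := card_injective_hom_eq_copyCount_mul (⊤ : SimpleGraph (Fin 4)) G
  rw [card_iso_self_cycleGraph_four, Nat.card_eq_fintype_card, Fintype.card_subtype] at hC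
  rw [card_iso_self_top_four, Nat.card_eq_fintype_card, Fintype.card_subtype] at hK
  set B := Finset.univ.filter fun f : Fin 4 → Fin n ↦
    Function.Injective f ∧ ∀ i j, (cycleGraph 4).Adj i j → G.Adj (f i) (f j)
  set K := Finset.univ.filter fun f : Fin 4 → Fin n ↦
    Function.Injective f ∧ ∀ i j, (⊤ : SimpleGraph (Fin 4)).Adj i j → G.Adj (f i) (f j)
  let e : (Fin 4 → Fin n) ↪ (Fin 4 → Fin n) :=
    (Equiv.arrowCongr (Equiv.swap (2 : Fin 4) 3) (Equiv.refl (Fin n))).toEmbedding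
  have he : ∀ f, e f = f ∘ Equiv.swap 2 3 := fun f ↦ rfl
  have s0 : Equiv.swap (2 : Fin 4) 3 0 = 0 := by decide
  have s1 : Equiv.swap (2 : Fin 4) 3 1 = 1 := by decide
  have s2 : Equiv.swap (2 : Fin 4) 3 2 = 3 := by decide
  have s3 : Equiv.swap (2 : Fin 4) 3 3 = 2 := by decide
  have hmem : ∀ f, f ∈ B.map e ↔ Function.Injective f ∧
      G.Adj (f 0) (f 1) ∧ G.Adj (f 1) (f 3) ∧ G.Adj (f 2) (f 3) ∧ G.Adj (f 0) (f 2) := by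
    intro f
    simp only [Finset.mem_map, B, Finset.mem_filter, Finset.mem_univ, true_and,
      cycleGraph_four_hom_iff, he]
    constructor
    · rintro ⟨g, ⟨hg, h1, h2, h3, h4⟩, rfl⟩
      refine ⟨hg.comp (Equiv.injective _), ?_⟩
      simp only [Function.comp_apply, s0, s1, s2, s3]
      exact ⟨h1, h2, h3.symm, h4⟩
    · rintro ⟨hf, h1, h2, h3, h4⟩
      refine ⟨f ∘ Equiv.swap 2 3, ⟨hf.comp (Equiv.injective _), ?_⟩, ?_⟩
      · simp only [Function.comp_apply, s0, s1, s2, s3]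
        exact ⟨h1, h2, h3.symm, h4⟩
      · funext i
        simp
  have hunion : Finset.univ.filter (IsOppositePair G) = B ∪ B.map e := by
    ext f
    simp only [Finset.mem_union, hmem]
    simp only [IsOppositePair, Finset.mem_filter, Finset.mem_univ, true_and,
      cycleGraph_four_hom_iff, B]
    tauto
  have hinter : K = B ∩ B.map e := by
    ext f
    simp only [Finset.mem_inter, hmem]
    simp only [Finset.mem_filter, Finset.mem_univ, true_and,
      cycleGraph_four_hom_iff, B, K]
    constructor
    · rintro ⟨hf, h⟩
      simp only [top_adj] at h
      exact ⟨⟨hf, h _ _ (by decide), h _ _ (by decide), h _ _ (by decide), h _ _ (by decide)⟩,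
        hf, h _ _ (by decide), h _ _ (by decide), h _ _ (by decide), h _ _ (by decide)⟩
    · rintro ⟨⟨hf, h1, h2, h3, h4⟩, -, -, h5, -, h6⟩
      refine ⟨hf, fun i j hij ↦ ?_⟩
      fin_cases i <;> fin_cases j <;>
        first
          | exact absurd rfl hij
          | assumption
          | exact Adj.symm (by assumption)
  have := Finset.card_union_add_card_inter B (B.map e)
  rw [← hunion, ← hinter, Finset.card_map] at this
  omega

lemma edgePair_eq_iff {f g : Fin 4 → Fin n} :
    edgePair g = edgePair f ↔
      g ∈ ({![f 0, f 1, f 2, f 3], ![f 1, f 0, f 2, f 3], ![f 0, f 1, f 3, f 2],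
        ![f 1, f 0, f 3, f 2], ![f 2, f 3, f 0, f 1], ![f 2, f 3, f 1, f 0], ![f 3, f 2, f 0, f 1],
        ![f 3, f 2, f 1, f 0]} : Finset (Fin 4 → Fin n)) := by
  have hg : ∀ a b c d, g = ![a, b, c, d] ↔ g 0 = a ∧ g 1 = b ∧ g 2 = c ∧ g 3 = d := by
    intro a b c d
    constructor
    · rintro rfl
      simp
    · rintro ⟨rfl, rfl, rfl, rfl⟩
      funext i
      fin_cases i <;> rfl
  simp only [Finset.mem_insert, Finset.mem_singleton, hg]
  rw [edgePair, edgePair, ← Finset.coe_inj]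
  simp only [Finset.coe_insert, Finset.coe_singleton, Set.pair_eq_pair_iff, Sym2.eq_iff]
  constructor
  · rintro (⟨⟨h1, h2⟩ | ⟨h1, h2⟩, ⟨h3, h4⟩ | ⟨h3, h4⟩⟩ |
      ⟨⟨h1, h2⟩ | ⟨h1, h2⟩, ⟨h3, h4⟩ | ⟨h3, h4⟩⟩) <;> simp [h1, h2, h3, h4]
  · rintro (h | h | h | h | h | h | h | h) <;> simp [h]

open Classical in
lemma card_filter_edgePair_eq (G : SimpleGraph (Fin n)) {f : Fin 4 → Fin n}
    (hf : IsOppositePair G f) :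
    (Finset.univ.filter fun g ↦ IsOppositePair G g ∧ edgePair g = edgePair f).card = 8 := by
  obtain ⟨h1, h2, h3, h4, h5, h6⟩ := (injective_fin_four_iff f).1 hf.1
  have : (Finset.univ.filter fun g ↦ IsOppositePair G g ∧ edgePair g = edgePair f) =
      {![f 0, f 1, f 2, f 3], ![f 1, f 0, f 2, f 3], ![f 0, f 1, f 3, f 2],
        ![f 1, f 0, f 3, f 2], ![f 2, f 3, f 0, f 1], ![f 2, f 3, f 1, f 0], ![f 3, f 2, f 0, f 1],
        ![f 3, f 2, f 1, f 0]} := by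
    ext g
    rw [← edgePair_eq_iff, Finset.mem_filter]
    refine ⟨fun h ↦ h.2.2, fun h ↦ ⟨Finset.mem_univ _, ?_, h⟩⟩
    obtain ⟨-, k1, k2, k3⟩ := hf
    have := edgePair_eq_iff.1 h
    simp only [Finset.mem_insert, Finset.mem_singleton] at this
    rw [IsOppositePair, injective_fin_four_iff]
    rcases this with rfl | rfl | rfl | rfl | rfl | rfl | rfl | rfl <;>
      simp [G.adj_comm, h1, h2, h3, h4, h5, h6, h1.symm, h2.symm, h3.symm, h4.symm, h5.symm,
        h6.symm] <;> grind [G.adj_comm]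
  rw [this]
  repeat rw [Finset.card_insert_of_notMem (by
    simp [h1, h2, h3, h4, h5, h6, h1.symm, h2.symm, h3.symm, h4.symm, h5.symm, h6.symm])]
  simp

open Classical in
lemma eight_mul_card_image_edgePair (G : SimpleGraph (Fin n)) :
    (Finset.univ.filter (IsOppositePair G)).card =
      8 * ((Finset.univ.filter (IsOppositePair G)).image edgePair).card := by
  rw [Finset.card_eq_sum_card_fiberwise (f := edgePair)
    (t := (Finset.univ.filter (IsOppositePair G)).image edgePair)
    (fun x hx ↦ Finset.mem_coe.2 (Finset.mem_image_of_mem _ hx)),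
    Finset.sum_congr rfl (g := fun _ ↦ 8)]
  · simp [mul_comm]
  · intro T hT
    obtain ⟨f, hf, rfl⟩ := Finset.mem_image.1 hT
    rw [Finset.filter_filter]
    exact card_filter_edgePair_eq G (Finset.mem_filter.1 hf).2

end SimpleGraph

section Convex

variable {E : Type*} [AddCommGroup E] [Module ℝ E]

/-- A supporting hyperplane of a convex hull meets it in the convex hull of the generators it
contains. -/
lemma sep_convexHull_eq_convexHull_sep {S : Set E} (l : E →ₗ[ℝ] ℝ) {M : ℝ}
    (hM : ∀ x ∈ S, l x ≤ M) :
    {x ∈ convexHull ℝ S | l x = M} = convexHull ℝ {x ∈ S | l x = M} := by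
  apply Subset.antisymm
  · suffices h : convexHull ℝ S ⊆
        {x | l x ≤ M ∧ (l x = M → x ∈ convexHull ℝ {x ∈ S | l x = M})} from
      fun x hx ↦ (h hx.1).2 hx.2
    refine convexHull_min (fun x hx ↦ ⟨hM x hx, fun h ↦ subset_convexHull ℝ _ ⟨hx, h⟩⟩) ?_
    rintro x ⟨hx, hx'⟩ y ⟨hy, hy'⟩ a b ha hb hab
    simp only [mem_ofPred_eq, map_add, map_smul, smul_eq_mul]
    have h1 : a * l x ≤ a * M := mul_le_mul_of_nonneg_left hx ha
    have h2 : b * l y ≤ b * M := mul_le_mul_of_nonneg_left hy hb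
    have h3 : a * M + b * M = M := by rw [← add_mul, hab, one_mul]
    refine ⟨by linarith, fun h ↦ ?_⟩
    rcases ha.eq_or_lt with rfl | ha
    · obtain rfl : b = 1 := by linarith
      simpa using hy' (by linarith)
    rcases hb.eq_or_lt with rfl | hb
    · obtain rfl : a = 1 := by linarith
      simpa using hx' (by linarith)
    have h4 : l x = M := mul_left_cancel₀ ha.ne' (by linarith)
    have h5 : l y = M := mul_left_cancel₀ hb.ne' (by linarith)
    exact convex_convexHull ℝ _ (hx' h4) (hy' h5) ha.le hb.le hab
  · refine fun x hx ↦ ⟨convexHull_mono (sep_subset _ _) hx, ?_⟩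
    have : convexHull ℝ {x ∈ S | l x = M} ⊆ {x | l x = M} :=
      convexHull_min (fun x hx ↦ hx.2) (convex_hyperplane l.isLinear M)
    exact this hx

end Convex

namespace SimpleGraph

variable {n : ℕ}

/-- The vertex `e_i + e_j` of the edge polytope belonging to the edge `{i, j}`. -/
noncomputable def edgeVec : Sym2 (Fin n) → (Fin n → ℝ) :=
  Sym2.lift ⟨fun i j ↦ Pi.single i 1 + Pi.single j 1, fun _ _ ↦ add_comm _ _⟩

/-- The sum of the weights of the two ends of an edge. -/
def edgeWeight (w : Fin n → ℝ) : Sym2 (Fin n) → ℝ :=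
  Sym2.lift ⟨fun i j ↦ w i + w j, fun _ _ ↦ add_comm _ _⟩

@[simp] lemma edgeVec_mk (i j : Fin n) :
    edgeVec s(i, j) = Pi.single i 1 + Pi.single j 1 := rfl

@[simp] lemma edgeWeight_mk (w : Fin n → ℝ) (i j : Fin n) : edgeWeight w s(i, j) = w i + w j := rfl

lemma edgePolytope_eq (G : SimpleGraph (Fin n)) :
    edgePolytope G = convexHull ℝ (edgeVec '' G.edgeSet) := by
  rw [edgePolytope]
  congr 1
  ext x
  constructor
  · rintro ⟨i, j, h, rfl⟩
    exact ⟨s(i, j), h, rfl⟩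
  · rintro ⟨e, he, rfl⟩
    induction e with
    | h i j => exact ⟨i, j, he, rfl⟩

lemma apply_edgeVec (l : (Fin n → ℝ) →ₗ[ℝ] ℝ) (e : Sym2 (Fin n)) :
    l (edgeVec e) = edgeWeight (fun i ↦ l (Pi.single i 1)) e := by
  induction e with
  | h i j => simp

lemma exists_dual_apply_edgeVec (w : Fin n → ℝ) :
    ∃ l : StrongDual ℝ (Fin n → ℝ), ∀ e, l (edgeVec e) = edgeWeight w e := by
  refine ⟨∑ i, w i • ContinuousLinearMap.proj i, fun e ↦ ?_⟩
  induction e with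
  | h i j => simp [mul_add, Finset.sum_add_distrib, Pi.single_apply]

/-- The set of edges of `G` of maximal total weight is `T`, for some weighting of the vertices. -/
def IsFaceSet (G : SimpleGraph (Fin n)) (T : Finset (Sym2 (Fin n))) : Prop :=
  T.Nonempty ∧ ∃ (w : Fin n → ℝ) (M : ℝ), (∀ e ∈ G.edgeSet, edgeWeight w e ≤ M) ∧
    ∀ e, e ∈ T ↔ e ∈ G.edgeSet ∧ edgeWeight w e = M

lemma IsFaceSet.subset {G : SimpleGraph (Fin n)} {T : Finset (Sym2 (Fin n))} (h : IsFaceSet G T) :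
    (T : Set (Sym2 (Fin n))) ⊆ G.edgeSet := by
  obtain ⟨-, w, M, -, h⟩ := h
  exact fun e he ↦ ((h e).1 he).1

lemma isExposed_of_isFaceSet {G : SimpleGraph (Fin n)} {T : Finset (Sym2 (Fin n))}
    (h : IsFaceSet G T) : IsExposed ℝ (edgePolytope G) (convexHull ℝ (edgeVec '' (T : Set _))) ∧
      ∀ e ∈ G.edgeSet, edgeVec e ∈ convexHull ℝ (edgeVec '' (T : Set _)) → e ∈ T := by
  obtain ⟨⟨e₀, he₀⟩, w, M, hle, hT⟩ := h
  obtain ⟨l, hl⟩ := exists_dual_apply_edgeVec w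
  have hle' : ∀ x ∈ edgeVec '' G.edgeSet, l x ≤ M := by
    rintro _ ⟨e, he, rfl⟩
    exact (hl e).trans_le (hle e he)
  have hset : edgeVec '' (T : Set _) = {x ∈ edgeVec '' G.edgeSet | l x = M} := by
    ext x
    constructor
    · rintro ⟨e, he, rfl⟩
      obtain ⟨h1, h2⟩ := (hT e).1 he
      exact ⟨⟨e, h1, rfl⟩, (hl e).trans h2⟩
    · rintro ⟨⟨e, he, rfl⟩, h2⟩
      exact ⟨e, (hT e).2 ⟨he, (hl e).symm.trans h2⟩, rfl⟩
  have hface := sep_convexHull_eq_convexHull_sep l.toLinearMap hle'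
  simp only [ContinuousLinearMap.coe_coe] at hface
  rw [hset, ← hface, ← edgePolytope_eq]
  have hP : ∀ x ∈ edgePolytope G, l x ≤ M := by
    rw [edgePolytope_eq]
    exact fun x hx ↦ convexHull_min hle' (convex_halfSpace_le l.toLinearMap.isLinear M) hx
  have he₀P : edgeVec e₀ ∈ edgePolytope G := by
    rw [edgePolytope_eq]
    exact subset_convexHull ℝ _ ⟨e₀, ((hT e₀).1 he₀).1, rfl⟩
  have he₀l : l (edgeVec e₀) = M := (hl e₀).trans ((hT e₀).1 he₀).2
  refine ⟨fun _ ↦ ⟨l, ?_⟩, fun e he h ↦ (hT e).2 ⟨he, (hl e).symm.trans h.2⟩⟩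
  ext x
  constructor
  · rintro ⟨hx, hxl⟩
    exact ⟨hx, fun y hy ↦ (hP y hy).trans_eq hxl.symm⟩
  · rintro ⟨hx, hxl⟩
    exact ⟨hx, (hP x hx).antisymm (he₀l ▸ hxl _ he₀P)⟩

lemma exists_isFaceSet_of_isExposed {G : SimpleGraph (Fin n)} {F : Set (Fin n → ℝ)}
    (hF : IsExposed ℝ (edgePolytope G) F) (hne : F.Nonempty) :
    ∃ T, IsFaceSet G T ∧ F = convexHull ℝ (edgeVec '' (T : Set _)) := by
  classical
  obtain ⟨l, hl⟩ := hF hne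
  obtain ⟨x₀, hx₀⟩ := hne
  have hle : ∀ x ∈ edgeVec '' G.edgeSet, l x ≤ l x₀ := by
    rw [hl] at hx₀
    exact fun x hx ↦ hx₀.2 x (edgePolytope_eq G ▸ subset_convexHull ℝ _ hx)
  have hF' : F = {x ∈ convexHull ℝ (edgeVec '' G.edgeSet) | l x = l x₀} := by
    rw [← edgePolytope_eq]
    rw [hl] at hx₀ ⊢
    ext x
    constructor
    · rintro ⟨hx, hxl⟩
      exact ⟨hx, (hx₀.2 x hx).antisymm (hxl x₀ hx₀.1)⟩
    · rintro ⟨hx, hxl⟩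
      exact ⟨hx, fun y hy ↦ (hx₀.2 y hy).trans_eq hxl.symm⟩
  have hface := sep_convexHull_eq_convexHull_sep l.toLinearMap hle
  simp only [ContinuousLinearMap.coe_coe] at hface
  set T : Finset (Sym2 (Fin n)) :=
    Finset.univ.filter fun e ↦ e ∈ G.edgeSet ∧ l (edgeVec e) = l x₀
  have hFT : F = convexHull ℝ (edgeVec '' (T : Set _)) := by
    rw [hF', hface]
    congr 1
    ext x
    constructor
    · rintro ⟨⟨e, he, rfl⟩, h⟩
      exact ⟨e, by simpa [T] using ⟨he, h⟩, rfl⟩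
    · rintro ⟨e, he, rfl⟩
      obtain ⟨h1, h2⟩ : e ∈ G.edgeSet ∧ l (edgeVec e) = l x₀ := by simpa [T] using he
      exact ⟨⟨e, h1, rfl⟩, h2⟩
  refine ⟨T, ⟨?_, fun i ↦ l (Pi.single i 1), l x₀, fun e he ↦ ?_, fun e ↦ ?_⟩, hFT⟩
  · rw [hFT] at hx₀
    have := convexHull_nonempty_iff.1 ⟨x₀, hx₀⟩
    simpa using this
  · exact (apply_edgeVec l.toLinearMap e).symm.trans_le (hle _ ⟨e, he, rfl⟩)
  · have := apply_edgeVec l.toLinearMap e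
    simp only [ContinuousLinearMap.coe_coe] at this
    simp [T, this]

lemma edgeVec_apply {G : SimpleGraph (Fin n)} {e : Sym2 (Fin n)}
    (he : e ∈ G.edgeSet) (i : Fin n) : edgeVec e i = if i ∈ e then 1 else 0 := by
  induction e with
  | h a b =>
    have : a ≠ b := G.ne_of_adj he
    by_cases h1 : i = a <;> by_cases h2 : i = b <;> simp_all

lemma injOn_edgeVec (G : SimpleGraph (Fin n)) : InjOn edgeVec G.edgeSet := by
  intro e he f hf h
  refine Sym2.ext fun i ↦ ?_
  have := congrFun h i
  rw [edgeVec_apply he, edgeVec_apply hf] at this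
  by_contra hne
  split_ifs at this <;> simp_all

lemma polyDim_convexHull (S : Set (Fin n → ℝ)) :
    polyDim (convexHull ℝ S) = Module.finrank ℝ (vectorSpan ℝ S) := by
  rw [polyDim, ← direction_affineSpan, affineSpan_convexHull, direction_affineSpan]

lemma eq_of_finrank_le_one {G : SimpleGraph (Fin n)} {S : Set (Sym2 (Fin n))} (hS : S ⊆ G.edgeSet)
    (h : Module.finrank ℝ (vectorSpan ℝ (edgeVec '' S)) ≤ 1) {e f g : Sym2 (Fin n)} (he : e ∈ S)
    (hf : f ∈ S) (hg : g ∈ S) (hef : e ≠ f) (heg : e ≠ g) : f = g := by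
  obtain ⟨v, hv⟩ := finrank_le_one_iff.1 h
  obtain ⟨a, ha⟩ := hv ⟨_, vsub_mem_vectorSpan ℝ (mem_image_of_mem _ hf) (mem_image_of_mem _ he)⟩
  obtain ⟨b, hb⟩ := hv ⟨_, vsub_mem_vectorSpan ℝ (mem_image_of_mem _ hg) (mem_image_of_mem _ he)⟩
  have ha' : ∀ i, a * v.1 i = edgeVec f i - edgeVec e i := fun i ↦
    congrFun (congrArg Subtype.val ha) i
  have hb' : ∀ i, b * v.1 i = edgeVec g i - edgeVec e i := fun i ↦
    congrFun (congrArg Subtype.val hb) i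
  have key : ∀ i, b * (edgeVec f i - edgeVec e i) = a * (edgeVec g i - edgeVec e i) := fun i ↦ by
    rw [← ha', ← hb']; ring
  have ha0 : a ≠ 0 := by
    rintro rfl
    exact hef (injOn_edgeVec G (hS he) (hS hf) (funext fun i ↦ by linarith [ha' i]))
  have hb0 : b ≠ 0 := by
    rintro rfl
    exact heg (injOn_edgeVec G (hS he) (hS hg) (funext fun i ↦ by linarith [hb' i]))
  refine Sym2.ext fun i ↦ ?_
  have := key i
  rw [edgeVec_apply (hS he), edgeVec_apply (hS hf),
    edgeVec_apply (hS hg)] at this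
  by_contra hne
  split_ifs at this <;> simp_all

lemma polyDim_eq_zero_iff {G : SimpleGraph (Fin n)} {T : Finset (Sym2 (Fin n))}
    (h : IsFaceSet G T) : polyDim (convexHull ℝ (edgeVec '' (T : Set (Sym2 (Fin n))))) = 0 ↔ T.card = 1 := by
  rw [polyDim_convexHull, Finset.card_eq_one]
  constructor
  · intro h0
    obtain ⟨e, he⟩ := h.1
    refine ⟨e, Finset.eq_singleton_iff_unique_mem.2 ⟨he, fun f hf ↦ ?_⟩⟩
    have := vsub_mem_vectorSpan ℝ (mem_image_of_mem edgeVec (Finset.mem_coe.2 hf))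
      (mem_image_of_mem edgeVec (Finset.mem_coe.2 he))
    rw [Submodule.finrank_eq_zero.1 h0, Submodule.mem_bot, vsub_eq_sub, sub_eq_zero] at this
    exact injOn_edgeVec G (h.subset hf) (h.subset he) this
  · rintro ⟨e, rfl⟩
    simp

lemma polyDim_eq_one_iff {G : SimpleGraph (Fin n)} {T : Finset (Sym2 (Fin n))}
    (h : IsFaceSet G T) : polyDim (convexHull ℝ (edgeVec '' (T : Set (Sym2 (Fin n))))) = 1 ↔ T.card = 2 := by
  classical
  constructor
  · intro h1
    have h2 : T.card ≠ 1 := fun h2 ↦ by simp [(polyDim_eq_zero_iff h).2 h2] at h1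
    rw [polyDim_convexHull] at h1
    have h3 : T.card ≠ 0 := (Finset.card_pos.2 h.1).ne'
    by_contra h4
    obtain ⟨e, f, g, he, hf, hg, hef, heg, hfg⟩ := Finset.two_lt_card_iff.1 (by omega : 2 < T.card)
    exact hfg (eq_of_finrank_le_one h.subset h1.le he hf hg hef heg)
  · intro h2
    obtain ⟨e, f, hef, rfl⟩ := Finset.card_eq_two.1 h2
    rw [polyDim_convexHull, Finset.coe_insert, Finset.coe_singleton, image_pair, vectorSpan_pair]
    refine finrank_span_singleton (sub_ne_zero.2 fun h3 ↦ hef ?_)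
    exact injOn_edgeVec G (h.subset (by simp)) (h.subset (by simp)) h3

open Classical in
lemma faceCount_eq_card {G : SimpleGraph (Fin n)} {k m : ℕ}
    (hk : ∀ T, IsFaceSet G T →
      (polyDim (convexHull ℝ (edgeVec '' (T : Set (Sym2 (Fin n))))) = k ↔ T.card = m)) :
    faceCount (edgePolytope G) k =
      (Finset.univ.filter fun T ↦ IsFaceSet G T ∧ T.card = m).card := by
  rw [faceCount, ← Set.ncard_coe_finset]
  symm
  refine Set.ncard_congr (fun T _ ↦ convexHull ℝ (edgeVec '' (T : Set _))) ?_ ?_ ?_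
  · intro T hT
    obtain ⟨h1, h2⟩ : IsFaceSet G T ∧ T.card = m := by simpa using hT
    exact ⟨(isExposed_of_isFaceSet h1).1,
      convexHull_nonempty_iff.2 (Set.Nonempty.image _ (Finset.coe_nonempty.2 h1.1)),
      (hk T h1).2 h2⟩
  · intro T U hT hU h
    replace hT : IsFaceSet G T := (by simpa using hT : IsFaceSet G T ∧ T.card = m).1
    replace hU : IsFaceSet G U := (by simpa using hU : IsFaceSet G U ∧ U.card = m).1
    ext e
    constructor
    · intro he
      exact (isExposed_of_isFaceSet hU).2 e (hT.subset he)
        (h ▸ subset_convexHull ℝ _ ⟨e, he, rfl⟩)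
    · intro he
      exact (isExposed_of_isFaceSet hT).2 e (hU.subset he)
        (h ▸ subset_convexHull ℝ _ ⟨e, he, rfl⟩)
  · rintro F ⟨h1, h2, h3⟩
    obtain ⟨T, hT, rfl⟩ := exists_isFaceSet_of_isExposed h1 h2
    exact ⟨T, by simpa using ⟨hT, (hk T hT).1 h3⟩, rfl⟩

end SimpleGraph

namespace SimpleGraph

variable {n : ℕ}

lemma isFaceSet_of_weight {G : SimpleGraph (Fin n)} {T : Finset (Sym2 (Fin n))} (hne : T.Nonempty)
    (w : Fin n → ℝ) (M : ℝ) (hT : ∀ e ∈ T, e ∈ G.edgeSet ∧ edgeWeight w e = M)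
    (h : ∀ x y, G.Adj x y → w x + w y ≤ M ∧ (w x + w y = M → s(x, y) ∈ T)) :
    IsFaceSet G T := by
  refine ⟨hne, w, M, fun e he ↦ ?_, fun e ↦ ⟨hT e, ?_⟩⟩ <;> induction e with
  | h x y => ?_
  · exact (h x y he).1
  · exact fun he ↦ (h x y he.1).2 he.2

lemma isFaceSet_singleton {G : SimpleGraph (Fin n)} {e : Sym2 (Fin n)} (he : e ∈ G.edgeSet) :
    IsFaceSet G {e} := by
  induction e with
  | h a b =>
    have hab : a ≠ b := G.ne_of_adj he
    refine isFaceSet_of_weight (by simp) (fun i ↦ if i = a ∨ i = b then 1 else 0) 2 ?_ ?_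
    · simp only [Finset.mem_singleton, forall_eq, edgeWeight_mk, true_or, or_true, if_true]
      exact ⟨he, by norm_num⟩
    · intro x y hxy
      have := G.ne_of_adj hxy
      rw [Finset.mem_singleton, Sym2.eq_iff]
      grind

lemma isFaceSet_pair_of_common {G : SimpleGraph (Fin n)} {a b c : Fin n} (hab : G.Adj a b)
    (hac : G.Adj a c) (hbc : b ≠ c) : IsFaceSet G {s(a, b), s(a, c)} := by
  have h1 := G.ne_of_adj hab
  have h2 := G.ne_of_adj hac
  refine isFaceSet_of_weight (by simp)
    (fun i ↦ if i = a then 2 else if i = b ∨ i = c then 1 else 0) 3 ?_ ?_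
  · simp only [Finset.mem_insert, Finset.mem_singleton, forall_eq_or_imp, forall_eq, edgeWeight_mk,
      mem_edgeSet]
    grind
  · intro x y hxy
    have := G.ne_of_adj hxy
    rw [Finset.mem_insert, Finset.mem_singleton, Sym2.eq_iff, Sym2.eq_iff]
    grind

lemma isFaceSet_pair_of_not_adj {G : SimpleGraph (Fin n)} {a b c d : Fin n} (hab : G.Adj a b)
    (hcd : G.Adj c d) (hbc : b ≠ c) (hbd : b ≠ d) (hac : a ≠ c) (had : a ≠ d)
    (hac' : ¬ G.Adj a c) (had' : ¬ G.Adj a d) : IsFaceSet G {s(a, b), s(c, d)} := by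
  have h1 := G.ne_of_adj hab
  have h2 := G.ne_of_adj hcd
  refine isFaceSet_of_weight (by simp)
    (fun i ↦ if i = a then 3 else if i = b then 1 else if i = c ∨ i = d then 2 else 0) 4 ?_ ?_
  · simp only [Finset.mem_insert, Finset.mem_singleton, forall_eq_or_imp, forall_eq, edgeWeight_mk,
      mem_edgeSet]
    grind
  · intro x y hxy
    have := G.ne_of_adj hxy
    have := G.adj_comm x y
    rw [Finset.mem_insert, Finset.mem_singleton, Sym2.eq_iff, Sym2.eq_iff]
    grind

lemma isFaceSet_pair_of_disjoint {G : SimpleGraph (Fin n)} {a b c d : Fin n} (hab : G.Adj a b)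
    (hcd : G.Adj c d) (hbc : b ≠ c) (hbd : b ≠ d) (hac : a ≠ c) (had : a ≠ d)
    (h : ¬ (G.Adj a c ∧ G.Adj b d ∨ G.Adj a d ∧ G.Adj b c)) :
    IsFaceSet G {s(a, b), s(c, d)} := by
  rw [not_or, not_and_or, not_and_or] at h
  obtain ⟨h1 | h1, h2 | h2⟩ := h
  · exact isFaceSet_pair_of_not_adj hab hcd hbc hbd hac had h1 h2
  · rw [Finset.pair_comm]
    exact isFaceSet_pair_of_not_adj hcd hab had.symm hbd.symm hac.symm hbc.symm
      (fun h ↦ h1 h.symm) (fun h ↦ h2 h.symm)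
  · rw [Finset.pair_comm, Sym2.eq_swap (a := c)]
    exact isFaceSet_pair_of_not_adj hcd.symm hab hac.symm hbc.symm had.symm hbd.symm
      (fun h ↦ h2 h.symm) (fun h ↦ h1 h.symm)
  · rw [Sym2.eq_swap (a := a)]
    exact isFaceSet_pair_of_not_adj hab.symm hcd hac had hbc hbd h2 h1

lemma not_isFaceSet_edgePair {G : SimpleGraph (Fin n)} {f : Fin 4 → Fin n}
    (hf : IsOppositePair G f) : ¬ IsFaceSet G (edgePair f) := by
  rintro ⟨-, w, M, hle, hT⟩
  obtain ⟨hinj, -, -, h⟩ := hf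
  obtain ⟨h1, h2, h3, h4, h5, h6⟩ := (injective_fin_four_iff f).1 hinj
  have h01 := ((hT s(f 0, f 1)).1 (by simp [edgePair])).2
  have h23 := ((hT s(f 2, f 3)).1 (by simp [edgePair])).2
  rw [edgeWeight_mk] at h01 h23
  rcases h with ⟨k1, k2⟩ | ⟨k1, k2⟩
  · have l1 := hle s(f 0, f 2) k1
    have l2 := hle s(f 1, f 3) k2
    rw [edgeWeight_mk] at l1 l2
    have := (hT s(f 0, f 2)).2 ⟨k1, by rw [edgeWeight_mk]; linarith⟩
    simp [edgePair, h1, h2, h3, h6, h2.symm, h4.symm] at this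
  · have l1 := hle s(f 0, f 3) k1
    have l2 := hle s(f 1, f 2) k2
    rw [edgeWeight_mk] at l1 l2
    have := (hT s(f 0, f 3)).2 ⟨k1, by rw [edgeWeight_mk]; linarith⟩
    simp [edgePair, h1, h2, h3, h3.symm, h5.symm] at this

lemma isFaceSet_or_exists_edgePair_eq {G : SimpleGraph (Fin n)} {e f : Sym2 (Fin n)}
    (he : e ∈ G.edgeSet) (hf : f ∈ G.edgeSet) (hef : e ≠ f) :
    IsFaceSet G {e, f} ∨ ∃ g, IsOppositePair G g ∧ edgePair g = {e, f} := by
  induction e with | h a b => ?_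
  induction f with | h c d => ?_
  rw [mem_edgeSet] at he hf
  by_cases hac : a = c
  · subst hac
    exact .inl (isFaceSet_pair_of_common he hf fun h ↦ hef (by rw [h]))
  by_cases had : a = d
  · subst had
    rw [Sym2.eq_swap (a := c)] at hef ⊢
    exact .inl (isFaceSet_pair_of_common he hf.symm fun h ↦ hef (by rw [h]))
  by_cases hbc : b = c
  · subst hbc
    rw [Sym2.eq_swap (a := a)] at hef ⊢
    exact .inl (isFaceSet_pair_of_common he.symm hf fun h ↦ hef (by rw [h]))
  by_cases hbd : b = d
  · subst hbd
    rw [Sym2.eq_swap (a := a), Sym2.eq_swap (a := c)] at hef ⊢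
    exact .inl (isFaceSet_pair_of_common he.symm hf.symm fun h ↦ hef (by rw [h]))
  by_cases h : G.Adj a c ∧ G.Adj b d ∨ G.Adj a d ∧ G.Adj b c
  · refine .inr ⟨![a, b, c, d], ⟨?_, he, hf, h⟩, rfl⟩
    exact (injective_fin_four_iff _).2 ⟨he.ne, hac, had, hbc, hbd, hf.ne⟩
  · exact .inl (isFaceSet_pair_of_disjoint he hf hbc hbd hac had h)

lemma ncard_edgeSet_eq_card (G : SimpleGraph (Fin n)) [Fintype G.edgeSet] :
    G.edgeSet.ncard = G.edgeFinset.card := by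
  rw [← coe_edgeFinset, Set.ncard_coe_finset]

lemma faceCount_zero_edgePolytope (G : SimpleGraph (Fin n)) :
    faceCount (edgePolytope G) 0 = G.edgeSet.ncard := by
  classical
  rw [faceCount_eq_card (fun T hT ↦ polyDim_eq_zero_iff hT), ncard_edgeSet_eq_card,
    ← Finset.card_image_of_injective G.edgeFinset Finset.singleton_injective]
  congr 1
  ext T
  simp only [Finset.mem_filter, Finset.mem_univ, true_and, Finset.mem_image, mem_edgeFinset]
  constructor
  · rintro ⟨hT, h1⟩
    obtain ⟨e, rfl⟩ := Finset.card_eq_one.1 h1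
    exact ⟨e, hT.subset (by simp), rfl⟩
  · rintro ⟨e, he, rfl⟩
    exact ⟨isFaceSet_singleton he, Finset.card_singleton e⟩

lemma IsOppositePair.card_edgePair_and_subset {G : SimpleGraph (Fin n)} {f : Fin 4 → Fin n}
    (hf : IsOppositePair G f) : (edgePair f).card = 2 ∧
      (edgePair f : Set (Sym2 (Fin n))) ⊆ G.edgeSet := by
  obtain ⟨hinj, h01, h23, -⟩ := hf
  obtain ⟨-, h2, h3, -⟩ := (injective_fin_four_iff f).1 hinj
  refine ⟨Finset.card_pair (by simp [h2, h3]), ?_⟩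
  simp [edgePair, Set.insert_subset_iff, h01, h23]

open Classical in
lemma faceCount_one_edgePolytope (G : SimpleGraph (Fin n)) :
    faceCount (edgePolytope G) 1 + ((Finset.univ.filter (IsOppositePair G)).image edgePair).card =
      G.edgeSet.ncard.choose 2 := by
  rw [faceCount_eq_card (fun T hT ↦ polyDim_eq_one_iff hT), ncard_edgeSet_eq_card,
    ← Finset.card_powersetCard, ← Finset.card_union_of_disjoint]
  · congr 1
    ext T
    simp only [Finset.mem_union, Finset.mem_filter, Finset.mem_univ, true_and, Finset.mem_image,
      Finset.mem_powersetCard, ← Finset.coe_subset, coe_edgeFinset]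
    constructor
    · rintro (⟨h1, h2⟩ | ⟨f, hf, rfl⟩)
      · exact ⟨h1.subset, h2⟩
      · exact hf.card_edgePair_and_subset.symm
    · rintro ⟨h1, h2⟩
      obtain ⟨e, f, hef, rfl⟩ := Finset.card_eq_two.1 h2
      exact (isFaceSet_or_exists_edgePair_eq (h1 (by simp)) (h1 (by simp)) hef).imp_left
        fun h ↦ ⟨h, h2⟩
  · rw [Finset.disjoint_left]
    intro T hT hT'
    obtain ⟨f, hf, rfl⟩ := Finset.mem_image.1 hT'
    exact not_isFaceSet_edgePair (Finset.mem_filter.1 hf).2 (Finset.mem_filter.1 hT).2.1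

end SimpleGraph

/-- For a graph `G` with no isolated vertices, the edge polytope `P(G)` has exactly
`e(G)` vertices and `C(e(G), 2) - 2 c₄(G) + 3 k₄(G)` edges, where `c₄(G)` and `k₄(G)`
are the numbers of subgraphs of `G` isomorphic to `C₄` and to `K₄` respectively. -/
theorem f0_f1_edgePolytope {n : ℕ} (G : SimpleGraph (Fin n))
    (hiso : ∀ v : Fin n, ∃ w : Fin n, G.Adj v w) :
    faceCount (edgePolytope G) 0 = G.edgeSet.ncard ∧
      (faceCount (edgePolytope G) 1 : ℤ) =
        (G.edgeSet.ncard.choose 2 : ℤ)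
          - 2 * copyCount G (SimpleGraph.cycleGraph 4)
          + 3 * copyCount G (⊤ : SimpleGraph (Fin 4)) := by
  refine ⟨G.faceCount_zero_edgePolytope, ?_⟩
  have h1 := G.faceCount_one_edgePolytope
  have h2 := G.card_isOppositePair
  have h3 := G.eight_mul_card_image_edgePair
  omega
end

section
/- Let G be a finite simple graph with no isolated vertices, and let f₀ and f₁ denote the numbers of vertices and edges of the edge polytope P(G). Then f₀^{3/2} − f₀ ≤ f₁, and equality holds if and only if G is a complete bipartite graph K_{m,m} with two parts of equal size. -/
open Set

namespace EdgePolytope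

/-- A level set of a linear functional that is maximal on a hull is the hull of the maximizers. -/
theorem convexHull_inter_level {E : Type*} [AddCommGroup E] [Module ℝ E] {V : Set E}
    (l : E →ₗ[ℝ] ℝ) {M : ℝ} (hl : ∀ v ∈ V, l v ≤ M) :
    convexHull ℝ V ∩ {x | l x = M} = convexHull ℝ (V ∩ {x | l x = M}) := by
  apply Subset.antisymm
  · rintro x ⟨hx, hxM⟩
    have hle : ∀ y ∈ convexHull ℝ (V ∩ {x | l x = M}), l y = M := fun y hy ↦
      convexHull_min (fun _ h ↦ h.2) (convex_hyperplane l.isLinear M) hy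
    have hM : ∀ s t : ℝ, s + t = 1 → s * M + t * M = M := fun s t h ↦ by
      rw [← add_mul, h, one_mul]
    have hconv : Convex ℝ {x | l x < M ∨ x ∈ convexHull ℝ (V ∩ {x | l x = M})} := by
      rintro a ha b hb s t hs ht hst
      rcases hs.eq_or_lt with rfl | hs
      · simpa [show t = 1 by linarith] using hb
      rcases ht.eq_or_lt with rfl | ht
      · simpa [show s = 1 by linarith] using ha
      rcases ha with ha | ha
      · left
        have hb' : l b ≤ M := hb.elim le_of_lt fun h ↦ (hle b h).le
        simp only [map_add, map_smul, smul_eq_mul]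
        nlinarith [hM s t hst, mul_lt_mul_of_pos_left ha hs, mul_le_mul_of_nonneg_left hb' ht.le]
      · rcases hb with hb | hb
        · left
          have ha' := hle a ha
          simp only [map_add, map_smul, smul_eq_mul]
          nlinarith [hM s t hst, mul_lt_mul_of_pos_left hb ht]
        · exact Or.inr (convex_convexHull ℝ _ ha hb hs.le ht.le hst)
    have hsub : V ⊆ {x | l x < M ∨ x ∈ convexHull ℝ (V ∩ {x | l x = M})} := fun v hv ↦
      (hl v hv).lt_or_eq.imp_right fun h ↦ subset_convexHull ℝ _ ⟨hv, h⟩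
    exact (convexHull_min hsub hconv hx).resolve_left (fun h : l x < M ↦ h.ne hxM)
  · exact subset_inter (convexHull_mono inter_subset_left)
      (convexHull_min inter_subset_right (convex_hyperplane l.isLinear M))

/-- The nonempty exposed faces of a convex hull are the hulls of the maximizers of a functional. -/
theorem isExposed_convexHull_and_nonempty_iff {E : Type*} [AddCommGroup E] [Module ℝ E]
    [TopologicalSpace E] {V F : Set E} :
    IsExposed ℝ (convexHull ℝ V) F ∧ F.Nonempty ↔
      ∃ (l : StrongDual ℝ E) (M : ℝ), (∀ v ∈ V, l v ≤ M) ∧ (V ∩ {x | l x = M}).Nonempty ∧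
        F = convexHull ℝ (V ∩ {x | l x = M}) := by
  constructor
  · rintro ⟨hF, hne⟩
    obtain ⟨l, rfl⟩ := hF hne
    obtain ⟨x, hx, hmax⟩ := hne
    have hV : ∀ v ∈ V, l v ≤ l x := fun v hv ↦ hmax v (subset_convexHull ℝ V hv)
    have heq : {y ∈ convexHull ℝ V | ∀ z ∈ convexHull ℝ V, l z ≤ l y} =
        convexHull ℝ V ∩ {y | l y = l x} := by
      ext y
      refine and_congr_right fun hy ↦ ⟨fun h ↦ (hmax y hy).antisymm (h x hx), fun h z hz ↦ ?_⟩
      exact (hmax z hz).trans (Eq.ge h)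
    have hlevel := convexHull_inter_level (l : E →ₗ[ℝ] ℝ) hV
    refine ⟨l, l x, hV, ?_, heq.trans hlevel⟩
    rw [← convexHull_nonempty_iff (𝕜 := ℝ)]
    exact ⟨x, hlevel.subset ⟨hx, rfl⟩⟩
  · rintro ⟨l, M, hV, hne, rfl⟩
    refine ⟨fun _ ↦ ⟨l, ?_⟩, hne.convexHull⟩
    have hlevel := convexHull_inter_level (l : E →ₗ[ℝ] ℝ) hV
    refine hlevel.symm.trans ?_
    have hle : ∀ y ∈ convexHull ℝ V, l y ≤ M := fun y hy ↦
      convexHull_min hV (convex_halfSpace_le (l : E →ₗ[ℝ] ℝ).isLinear M) hy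
    obtain ⟨w, hw, hwM⟩ := hne
    ext y
    refine and_congr_right fun hy ↦ ⟨fun h z hz ↦ (hle z hz).trans (Eq.ge h), fun h ↦ ?_⟩
    exact (hle y hy).antisymm ((Eq.ge hwM).trans (h w (subset_convexHull ℝ V hw)))

section Dimension

variable {n : ℕ}

theorem polyDim_convexHull (S : Set (Fin n → ℝ)) : polyDim (convexHull ℝ S) = polyDim S := by
  rw [polyDim, polyDim, ← direction_affineSpan, affineSpan_convexHull, direction_affineSpan]

theorem polyDim_eq_zero_iff {S : Set (Fin n → ℝ)} : polyDim S = 0 ↔ S.Subsingleton := by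
  rw [polyDim, Submodule.finrank_eq_zero]
  constructor
  · intro h x hx y hy
    have := vsub_mem_vectorSpan ℝ hx hy
    rw [h, Submodule.mem_bot] at this
    exact sub_eq_zero.1 this
  · exact fun h ↦ vectorSpan_of_subsingleton ℝ h

theorem polyDim_pair {x y : Fin n → ℝ} (h : x ≠ y) : polyDim {x, y} = 1 := by
  rw [polyDim, vectorSpan_pair]
  exact finrank_span_singleton (sub_ne_zero.2 h)

theorem exists_smul_of_polyDim_eq_one {S : Set (Fin n → ℝ)} (hS : polyDim S = 1)
    {x y z : Fin n → ℝ} (hx : x ∈ S) (hy : y ∈ S) (hz : z ∈ S) (hxy : x ≠ y) :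
    ∃ c : ℝ, z - x = c • (y - x) := by
  obtain ⟨v, hv⟩ := (collinear_iff_of_mem hx).1 (collinear_iff_finrank_le_one.2 hS.le)
  obtain ⟨r, rfl⟩ := hv y hy
  obtain ⟨t, rfl⟩ := hv z hz
  have hr : r ≠ 0 := by rintro rfl; simp at hxy
  refine ⟨t / r, ?_⟩
  simp [smul_smul, hr]

end Dimension

section EdgeVec

variable {n : ℕ}

/-- The indicator vector of an unordered pair of vertices. -/
def edgeVec (e : Sym2 (Fin n)) : Fin n → ℝ := fun i ↦ if i ∈ e then 1 else 0

theorem edgeVec_injective : Function.Injective (edgeVec (n := n)) := by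
  intro e f h
  ext i
  have := congrFun h i
  simp only [edgeVec] at this
  split_ifs at this <;> simp_all

theorem edgeVec_mk {i j : Fin n} (h : i ≠ j) :
    edgeVec s(i, j) = Pi.single i 1 + Pi.single j 1 := by
  ext k
  simp only [edgeVec, Sym2.mem_iff, Pi.add_apply, Pi.single_apply]
  grind

theorem edgePolytope_eq (G : SimpleGraph (Fin n)) :
    edgePolytope G = convexHull ℝ (edgeVec '' G.edgeSet) := by
  rw [edgePolytope]
  congr 1
  ext x
  constructor
  · rintro ⟨i, j, h, rfl⟩
    exact ⟨s(i, j), h, edgeVec_mk h.ne⟩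
  · rintro ⟨e, he, rfl⟩
    induction e with | h i j =>
    exact ⟨i, j, he, edgeVec_mk (G.ne_of_adj he)⟩

/-- No three distinct indicator vectors of pairs are collinear. -/
theorem eq_or_eq_of_edgeVec_sub_eq_smul {e f g : Sym2 (Fin n)} (hef : e ≠ f) {c : ℝ}
    (h : edgeVec g - edgeVec e = c • (edgeVec f - edgeVec e)) : g = e ∨ g = f := by
  have hi : ∀ i, edgeVec g i - edgeVec e i = c * (edgeVec f i - edgeVec e i) := fun i ↦
    congrFun h i
  have h01 : ∀ (e : Sym2 (Fin n)) i, edgeVec e i = 0 ∨ edgeVec e i = 1 := fun e i ↦ by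
    unfold edgeVec; split_ifs <;> simp
  obtain ⟨i, hne⟩ := Function.ne_iff.1 (edgeVec_injective.ne hef)
  have hc : c = 0 ∨ c = 1 ∨ c = -1 := by
    have := hi i
    rcases h01 e i with h1 | h1 <;> rcases h01 f i with h2 | h2 <;>
      rcases h01 g i with h3 | h3 <;> rw [h1, h2] at hne <;> rw [h1, h2, h3] at this <;> grind
  rcases hc with rfl | rfl | rfl
  · exact Or.inl (edgeVec_injective (funext fun i ↦ by linarith [hi i]))
  · exact Or.inr (edgeVec_injective (funext fun i ↦ by linarith [hi i]))
  · have := hi i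
    rcases h01 e i with h1 | h1 <;> rcases h01 f i with h2 | h2 <;>
      rcases h01 g i with h3 | h3 <;> rw [h1, h2] at hne <;> rw [h1, h2, h3] at this <;> grind

/-- The linear functional with prescribed weights on the coordinates. -/
noncomputable def weight (c : Fin n → ℝ) : StrongDual ℝ (Fin n → ℝ) :=
  ∑ i, c i • ContinuousLinearMap.proj i

theorem weight_edgeVec (c : Fin n → ℝ) {i j : Fin n} (h : i ≠ j) :
    weight c (edgeVec s(i, j)) = c i + c j := by
  simp [weight, edgeVec_mk h, mul_add, Finset.sum_add_distrib, Pi.single_apply]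

end EdgeVec

section Skeleton

/-- Two disjoint edges are opposite if they are opposite sides of a 4-cycle. -/
def IsOpposite {V : Type*} (G : SimpleGraph V) (e f : Sym2 V) : Prop :=
  ∃ i j k l, e = s(i, j) ∧ f = s(k, l) ∧ G.Adj i k ∧ G.Adj j l ∧ i ≠ l ∧ j ≠ k

theorem IsOpposite.symm {V : Type*} {G : SimpleGraph V} {e f : Sym2 V} (h : IsOpposite G e f) :
    IsOpposite G f e := by
  obtain ⟨i, j, k, l, he, hf, hik, hjl, hil, hjk⟩ := h
  exact ⟨k, l, i, j, hf, he, hik.symm, hjl.symm, hjk.symm, hil.symm⟩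

theorem not_isOpposite_self {V : Type*} {G : SimpleGraph V} {e : Sym2 V} : ¬ IsOpposite G e e := by
  rintro ⟨i, j, k, l, rfl, h, hik, hjl, hil, hjk⟩
  have := hik.ne
  rw [Sym2.eq_iff] at h
  grind

/-- The graph formed by the vertices and edges of the edge polytope. -/
def skeleton {V : Type*} (G : SimpleGraph V) : SimpleGraph (Sym2 V) where
  Adj e f := e ∈ G.edgeSet ∧ f ∈ G.edgeSet ∧ e ≠ f ∧ ¬ IsOpposite G e f
  symm := ⟨fun _ _ h ↦ ⟨h.2.1, h.1, h.2.2.1.symm, fun h' ↦ h.2.2.2 h'.symm⟩⟩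
  loopless := ⟨fun _ h ↦ h.2.2.1 rfl⟩

variable {n : ℕ} {G : SimpleGraph (Fin n)}

theorem exists_weight_singleton {e : Sym2 (Fin n)} (he : e ∈ G.edgeSet) :
    ∃ (c : Fin n → ℝ) (M : ℝ), ∀ g ∈ G.edgeSet,
      weight c (edgeVec g) ≤ M ∧ (weight c (edgeVec g) = M ↔ g = e) := by
  induction e with | h i j =>
  have hij : i ≠ j := G.ne_of_adj he
  refine ⟨fun x ↦ if x = i ∨ x = j then 1 else 0, 2, fun g hg ↦ ?_⟩
  induction g with | h x y =>
  have hxy : x ≠ y := G.ne_of_adj hg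
  rw [weight_edgeVec _ hxy]
  simp only [Sym2.eq_iff]
  split_ifs <;> norm_num <;> grind

theorem exists_weight_of_common_vertex {i j k : Fin n} (hij : i ≠ j) (hik : i ≠ k) :
    ∃ (c : Fin n → ℝ) (M : ℝ), ∀ g ∈ G.edgeSet,
      weight c (edgeVec g) ≤ M ∧ (weight c (edgeVec g) = M ↔ g = s(i, j) ∨ g = s(i, k)) := by
  refine ⟨fun x ↦ if x = i then 2 else if x = j ∨ x = k then 1 else 0, 3, fun g hg ↦ ?_⟩
  induction g with | h x y =>
  have hxy : x ≠ y := G.ne_of_adj hg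
  rw [weight_edgeVec _ hxy]
  simp only [Sym2.eq_iff]
  split_ifs <;> norm_num <;> grind

theorem exists_weight_of_disjoint {i j k l : Fin n} (hij : i ≠ j) (hjk : j ≠ k) (hjl : j ≠ l)
    (hk : ¬ G.Adj i k) (hl : ¬ G.Adj i l) :
    ∃ (c : Fin n → ℝ) (M : ℝ), ∀ g ∈ G.edgeSet,
      weight c (edgeVec g) ≤ M ∧ (weight c (edgeVec g) = M ↔ g = s(i, j) ∨ g = s(k, l)) := by
  refine ⟨fun x ↦ if x = i then 3 else if x = j then 1 else if x = k ∨ x = l then 2 else 0, 4,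
    fun g hg ↦ ?_⟩
  induction g with | h x y =>
  rw [SimpleGraph.mem_edgeSet] at hg
  have hxy : x ≠ y := hg.ne
  have hg' := hg.symm
  rw [weight_edgeVec _ hxy]
  simp only [Sym2.eq_iff]
  split_ifs <;> norm_num <;> grind

theorem exists_weight_pair {e f : Sym2 (Fin n)} (h : (skeleton G).Adj e f) :
    ∃ (c : Fin n → ℝ) (M : ℝ), ∀ g ∈ G.edgeSet,
      weight c (edgeVec g) ≤ M ∧ (weight c (edgeVec g) = M ↔ g = e ∨ g = f) := by
  obtain ⟨he, hf, hne, hopp⟩ := h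
  induction e with | h i j =>
  induction f with | h k l =>
  have hij : i ≠ j := G.ne_of_adj he
  have hkl : k ≠ l := G.ne_of_adj hf
  by_cases hik : i = k
  · subst hik
    exact exists_weight_of_common_vertex hij hkl
  by_cases hil : i = l
  · subst hil
    rw [Sym2.eq_swap (a := k)]
    exact exists_weight_of_common_vertex hij (Ne.symm hkl)
  by_cases hjk : j = k
  · subst hjk
    rw [Sym2.eq_swap (a := i)]
    exact exists_weight_of_common_vertex hij.symm hkl
  by_cases hjl : j = l
  · subst hjl
    rw [Sym2.eq_swap (a := i), Sym2.eq_swap (a := k)]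
    exact exists_weight_of_common_vertex hij.symm hkl.symm
  have h1 : ¬ (G.Adj i k ∧ G.Adj j l) := fun h ↦
    hopp ⟨i, j, k, l, rfl, rfl, h.1, h.2, hil, hjk⟩
  have h2 : ¬ (G.Adj i l ∧ G.Adj j k) := fun h ↦
    hopp ⟨i, j, l, k, rfl, Sym2.eq_swap, h.1, h.2, hik, hjl⟩
  by_cases hk : G.Adj i k
  · have hjl' : ¬ G.Adj j l := fun h ↦ h1 ⟨hk, h⟩
    by_cases hl : G.Adj i l
    · have hjk' : ¬ G.Adj j k := fun h ↦ h2 ⟨hl, h⟩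
      rw [Sym2.eq_swap (a := i)]
      exact exists_weight_of_disjoint hij.symm hik hil hjk' hjl'
    · rw [Sym2.eq_swap (a := k)]
      simp only [or_comm (b := _ = s(l, k))]
      exact exists_weight_of_disjoint hkl.symm (Ne.symm hik) (Ne.symm hjk)
        (fun h ↦ hl h.symm) (fun h ↦ hjl' h.symm)
  · by_cases hl : G.Adj i l
    · have hjk' : ¬ G.Adj j k := fun h ↦ h2 ⟨hl, h⟩
      simp only [or_comm (b := _ = s(k, l))]
      exact exists_weight_of_disjoint hkl (Ne.symm hil) (Ne.symm hjl)
        (fun h ↦ hk h.symm) (fun h ↦ hjk' h.symm)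
    · exact exists_weight_of_disjoint hij hjk hjl hk hl

theorem isExposed_edgePolytope_and_nonempty_iff {F : Set (Fin n → ℝ)} :
    IsExposed ℝ (edgePolytope G) F ∧ F.Nonempty ↔
      ∃ (l : StrongDual ℝ (Fin n → ℝ)) (M : ℝ), (∀ e ∈ G.edgeSet, l (edgeVec e) ≤ M) ∧
        {e ∈ G.edgeSet | l (edgeVec e) = M}.Nonempty ∧
        F = convexHull ℝ (edgeVec '' {e ∈ G.edgeSet | l (edgeVec e) = M}) := by
  have himage : ∀ (l : StrongDual ℝ (Fin n → ℝ)) (M : ℝ),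
      edgeVec '' G.edgeSet ∩ {x | l x = M} =
        edgeVec '' {e ∈ G.edgeSet | l (edgeVec e) = M} := fun l M ↦
    image_inter_preimage edgeVec G.edgeSet {x | l x = M} |>.symm
  simp only [edgePolytope_eq, isExposed_convexHull_and_nonempty_iff, himage, forall_mem_image,
    image_nonempty]

theorem faceCount_zero : faceCount (edgePolytope G) 0 = G.edgeSet.ncard := by
  have hinj : Function.Injective fun e : Sym2 (Fin n) ↦ ({edgeVec e} : Set (Fin n → ℝ)) :=
    singleton_injective.comp edgeVec_injective
  rw [faceCount, ← ncard_image_of_injective G.edgeSet hinj]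
  congr 1
  ext F
  rw [mem_ofPred_eq, ← and_assoc, isExposed_edgePolytope_and_nonempty_iff]
  constructor
  · rintro ⟨⟨l, M, -, ⟨e, he⟩, rfl⟩, hdim⟩
    rw [polyDim_convexHull, polyDim_eq_zero_iff] at hdim
    refine ⟨e, he.1, ?_⟩
    rw [hdim.eq_singleton_of_mem (mem_image_of_mem _ he), convexHull_singleton]
  · rintro ⟨e, he, rfl⟩
    obtain ⟨c, M, hc⟩ := exists_weight_singleton he
    have hface : {g ∈ G.edgeSet | weight c (edgeVec g) = M} = {e} := by
      ext g
      exact ⟨fun h ↦ ((hc g h.1).2.1 h.2), fun h ↦ by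
        obtain rfl : g = e := h
        exact ⟨he, (hc g he).2.2 rfl⟩⟩
    refine ⟨⟨weight c, M, fun g hg ↦ (hc g hg).1, ?_⟩, ?_⟩
    · simp [hface]
    · exact polyDim_eq_zero_iff.2 subsingleton_singleton

/-- The segment spanned by an unordered pair of vertices of the edge polytope. -/
def edgeSegment (p : Sym2 (Sym2 (Fin n))) : Set (Fin n → ℝ) :=
  convexHull ℝ (edgeVec '' {e | e ∈ p})

theorem mem_of_edgeVec_mem_edgeSegment {p : Sym2 (Sym2 (Fin n))} (hp : p ∈ (skeleton G).edgeSet)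
    {g : Sym2 (Fin n)} (hg : edgeVec g ∈ edgeSegment p) : g ∈ p := by
  induction p with | h e f =>
  by_contra hgp
  rw [Sym2.mem_iff, not_or] at hgp
  have hne : e ≠ f := (skeleton G).ne_of_adj hp
  have hpair : edgeVec '' {x | x ∈ s(e, f)} = {edgeVec e, edgeVec f} := by
    rw [← image_pair]
    congr 1
    ext x
    simp
  rw [edgeSegment, hpair] at hg
  have hdim : polyDim (convexHull ℝ {edgeVec e, edgeVec f}) = 1 := by
    rw [polyDim_convexHull, polyDim_pair (edgeVec_injective.ne hne)]
  obtain ⟨c, hc⟩ := exists_smul_of_polyDim_eq_one hdim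
    (subset_convexHull ℝ _ (mem_insert _ _)) (subset_convexHull ℝ _ (mem_insert_of_mem _ rfl)) hg
    (edgeVec_injective.ne hne)
  exact (eq_or_eq_of_edgeVec_sub_eq_smul hne hc).elim hgp.1 hgp.2

theorem edgeSegment_injOn : InjOn edgeSegment (skeleton G).edgeSet := by
  intro p hp q hq h
  have hmem : ∀ {p : Sym2 (Sym2 (Fin n))} {g}, g ∈ p → edgeVec g ∈ edgeSegment p := fun hg ↦
    subset_convexHull ℝ _ (mem_image_of_mem _ hg)
  ext g
  exact ⟨fun hg ↦ mem_of_edgeVec_mem_edgeSegment hq (h ▸ hmem hg),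
    fun hg ↦ mem_of_edgeVec_mem_edgeSegment hp (h ▸ hmem hg)⟩

theorem faceCount_one : faceCount (edgePolytope G) 1 = (skeleton G).edgeSet.ncard := by
  rw [faceCount, ← (edgeSegment_injOn (G := G)).ncard_image]
  congr 1
  ext F
  rw [mem_ofPred_eq, ← and_assoc, isExposed_edgePolytope_and_nonempty_iff]
  constructor
  · rintro ⟨⟨l, M, hl, -, rfl⟩, hdim⟩
    rw [polyDim_convexHull] at hdim
    have hnt : {e ∈ G.edgeSet | l (edgeVec e) = M}.Nontrivial := by
      rw [← not_subsingleton_iff]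
      intro h
      rw [polyDim_eq_zero_iff.2 (h.image edgeVec)] at hdim
      exact zero_ne_one hdim
    obtain ⟨e, he, f, hf, hne⟩ := hnt
    have hall : ∀ g ∈ {e ∈ G.edgeSet | l (edgeVec e) = M}, g = e ∨ g = f := by
      intro g hg
      obtain ⟨c, hc⟩ := exists_smul_of_polyDim_eq_one hdim (mem_image_of_mem _ he)
        (mem_image_of_mem _ hf) (mem_image_of_mem _ hg) (edgeVec_injective.ne hne)
      exact eq_or_eq_of_edgeVec_sub_eq_smul hne hc
    refine ⟨s(e, f), ⟨he.1, hf.1, hne, ?_⟩, ?_⟩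
    · rintro ⟨i, j, k, m, rfl, rfl, hik, hjm, him, hjk⟩
      have hij : i ≠ j := G.ne_of_adj he.1
      have hkm : k ≠ m := G.ne_of_adj hf.1
      have h1 := he.2
      have h2 := hf.2
      have h3 := hl s(i, k) hik
      have h4 := hl s(j, m) hjm
      have hsum : l (edgeVec s(i, k)) + l (edgeVec s(j, m)) =
          l (edgeVec s(i, j)) + l (edgeVec s(k, m)) := by
        simp only [edgeVec_mk hij, edgeVec_mk hkm, edgeVec_mk hik.ne, edgeVec_mk hjm.ne, map_add]
        ring
      have := hall s(i, k) ⟨hik, by linarith⟩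
      simp only [Sym2.eq_iff] at this
      grind
    · rw [edgeSegment]
      congr 2
      ext g
      rw [mem_ofPred_eq, Sym2.mem_iff]
      exact ⟨by rintro (rfl | rfl) <;> assumption, hall g⟩
  · rintro ⟨p, hp, rfl⟩
    induction p with | h e f =>
    obtain ⟨c, M, hc⟩ := exists_weight_pair hp
    have hface : {g ∈ G.edgeSet | weight c (edgeVec g) = M} = {e, f} := by
      ext g
      refine ⟨fun h ↦ (hc g h.1).2.1 h.2, fun h ↦ ?_⟩
      have hg : g ∈ G.edgeSet := by rcases h with rfl | rfl; exacts [hp.1, hp.2.1]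
      exact ⟨hg, (hc g hg).2.2 h⟩
    have hpair : {x | x ∈ s(e, f)} = {e, f} := by ext x; simp
    refine ⟨⟨weight c, M, fun g hg ↦ (hc g hg).1, ?_⟩, ?_⟩
    · rw [hface, edgeSegment, hpair]
      exact ⟨insert_nonempty _ _, rfl⟩
    · rw [edgeSegment, polyDim_convexHull, hpair, image_pair]
      exact polyDim_pair (edgeVec_injective.ne ((skeleton G).ne_of_adj hp))

end Skeleton

section Counting

open Finset SimpleGraph

open scoped Classical in
/-- The edges of `G` that are opposite to `e`. -/
noncomputable def oppositeEdges {V : Type*} [Fintype V] (G : SimpleGraph V) (e : Sym2 V) :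
    Finset (Sym2 V) :=
  {f ∈ G.edgeFinset | IsOpposite G e f}

variable {V : Type*} [Fintype V] {G : SimpleGraph V}

open scoped Classical in
theorem degree_skeleton_add {e : Sym2 V} (he : e ∈ G.edgeSet) :
    (skeleton G).degree e + #(oppositeEdges G e) + 1 = #G.edgeFinset := by
  have hN : (skeleton G).neighborFinset e =
      (G.edgeFinset.filter fun f ↦ ¬ IsOpposite G e f).erase e := by
    ext f
    simp only [mem_neighborFinset, mem_erase, Finset.mem_filter, mem_edgeFinset]
    exact ⟨fun h ↦ ⟨h.2.2.1.symm, h.2.1, h.2.2.2⟩, fun h ↦ ⟨he, h.2.1, h.1.symm, h.2.2⟩⟩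
  have hmem : e ∈ G.edgeFinset.filter fun f ↦ ¬ IsOpposite G e f := by
    simp [not_isOpposite_self, he]
  have hcard := card_erase_add_one hmem
  rw [← hN, card_neighborFinset_eq_degree] at hcard
  have := G.edgeFinset.card_filter_add_card_filter_not fun f ↦ IsOpposite G e f
  rw [oppositeEdges]
  omega

open scoped Classical in
theorem card_oppositeEdges_le_card_filter {i j : V} :
    #(oppositeEdges G s(i, j)) ≤
      #{p ∈ (G.neighborFinset i).erase j ×ˢ (G.neighborFinset j).erase i | G.Adj p.1 p.2} := by
  refine (Finset.card_le_card ?_).trans (card_image_le (f := fun p : V × V ↦ s(p.1, p.2)))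
  intro f hf
  obtain ⟨hf, i', j', k, l, he, rfl, hik, hjl, hil, hjk⟩ := Finset.mem_filter.1 hf
  rw [mem_edgeFinset, mem_edgeSet] at hf
  simp only [Finset.mem_image, Finset.mem_filter, Finset.mem_product, mem_erase,
    mem_neighborFinset, Prod.exists]
  rcases Sym2.eq_iff.1 he with ⟨rfl, rfl⟩ | ⟨rfl, rfl⟩
  · exact ⟨k, l, ⟨⟨⟨hjk.symm, hik⟩, hil.symm, hjl⟩, hf⟩, rfl⟩
  · exact ⟨l, k, ⟨⟨⟨hil.symm, hjl⟩, hjk.symm, hik⟩, hf.symm⟩, Sym2.eq_swap⟩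

open scoped Classical in
theorem card_erase_product {i j : V} (h : G.Adj i j) :
    #((G.neighborFinset i).erase j ×ˢ (G.neighborFinset j).erase i) =
      (G.degree i - 1) * (G.degree j - 1) := by
  rw [card_product, card_erase_of_mem (by simpa using h), card_erase_of_mem (by simpa using h.symm),
    card_neighborFinset_eq_degree, card_neighborFinset_eq_degree]

open scoped Classical in
theorem card_oppositeEdges_le {i j : V} (h : G.Adj i j) :
    #(oppositeEdges G s(i, j)) ≤ (G.degree i - 1) * (G.degree j - 1) := by
  rw [← card_erase_product h]
  exact card_oppositeEdges_le_card_filter.trans (card_filter_le _ _)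

open scoped Classical in
theorem card_incidenceFinset_union {i j : V} (h : G.Adj i j) :
    #(G.incidenceFinset i ∪ G.incidenceFinset j) + 1 = G.degree i + G.degree j := by
  have hinter : G.incidenceFinset i ∩ G.incidenceFinset j = {s(i, j)} := by
    rw [← coe_inj]
    push_cast
    simpa using G.incidenceSet_inter_incidenceSet_of_adj h
  have := card_union_add_card_inter (G.incidenceFinset i) (G.incidenceFinset j)
  rw [hinter, Finset.card_singleton, card_incidenceFinset_eq_degree,
    card_incidenceFinset_eq_degree] at this
  exact this

open scoped Classical in
theorem card_sdiff_incidenceFinset_union {i j : V} (h : G.Adj i j) :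
    #(G.edgeFinset \ (G.incidenceFinset i ∪ G.incidenceFinset j)) + G.degree i + G.degree j =
      #G.edgeFinset + 1 := by
  have hsub : G.incidenceFinset i ∪ G.incidenceFinset j ⊆ G.edgeFinset :=
    union_subset (G.incidenceFinset_subset i) (G.incidenceFinset_subset j)
  have h1 := card_sdiff_add_card_eq_card hsub
  have h2 := card_incidenceFinset_union h
  omega

open scoped Classical in
theorem oppositeEdges_subset {i j : V} :
    oppositeEdges G s(i, j) ⊆
      G.edgeFinset \ (G.incidenceFinset i ∪ G.incidenceFinset j) := by
  intro f hf
  obtain ⟨hf, i', j', k, l, he, rfl, hik, hjl, hil, hjk⟩ := Finset.mem_filter.1 hf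
  have := hik.ne
  have := hjl.ne
  rw [Sym2.eq_iff] at he
  simp only [Finset.mem_sdiff, Finset.mem_union, mem_incidenceFinset, mk'_mem_incidenceSet_iff]
  grind

open scoped Classical in
theorem card_oppositeEdges_add_le {i j : V} (h : G.Adj i j) :
    #(oppositeEdges G s(i, j)) + G.degree i + G.degree j ≤ #G.edgeFinset + 1 := by
  have := Finset.card_le_card (oppositeEdges_subset (G := G) (i := i) (j := j))
  have := card_sdiff_incidenceFinset_union h
  omega

open scoped Classical in
/-- The degree bound in the skeleton, together with the consequences of equality. -/
theorem two_sqrt_sub_two_le_degree_skeleton {i j : V} (h : G.Adj i j) :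
    2 * √(#G.edgeFinset : ℝ) - 2 ≤ (skeleton G).degree s(i, j) ∧
      ((skeleton G).degree s(i, j) = 2 * √(#G.edgeFinset : ℝ) - 2 →
        G.degree i = G.degree j ∧ #G.edgeFinset = G.degree i * G.degree i ∧
          #(oppositeEdges G s(i, j)) = (G.degree i - 1) * (G.degree j - 1)) := by
  have h1 := degree_skeleton_add (G := G) (e := s(i, j)) h
  have h2 := card_oppositeEdges_le h
  have h3 := card_oppositeEdges_add_le h
  have hi : 1 ≤ G.degree i := (G.degree_pos_iff_exists_adj i).2 ⟨j, h⟩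
  have hj : 1 ≤ G.degree j := (G.degree_pos_iff_exists_adj j).2 ⟨i, h.symm⟩
  generalize #(oppositeEdges G s(i, j)) = o at *
  generalize (skeleton G).degree s(i, j) = D at *
  generalize G.degree i = a at *
  generalize G.degree j = b at *
  obtain ⟨a, rfl⟩ := Nat.exists_eq_add_of_le' hi
  obtain ⟨b, rfl⟩ := Nat.exists_eq_add_of_le' hj
  simp only [Nat.add_sub_cancel] at *
  generalize #G.edgeFinset = m at *
  have hr0 : 0 ≤ √(m : ℝ) := Real.sqrt_nonneg _
  have hr2 : √(m : ℝ) * √(m : ℝ) = m := Real.mul_self_sqrt (Nat.cast_nonneg m)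
  have hm : (1 : ℝ) ≤ m := by exact_mod_cast (show 1 ≤ m by omega)
  have hr1 : 1 ≤ √(m : ℝ) := Real.one_le_sqrt.2 hm
  set r := √(m : ℝ)
  have h1' : (D : ℝ) + o + 1 = m := by exact_mod_cast h1
  have h2' : (o : ℝ) ≤ a * b := by exact_mod_cast h2
  have h3' : (a : ℝ) + b ≤ D := by exact_mod_cast (show a + b ≤ D by omega)
  have ha0 : (0 : ℝ) ≤ a := Nat.cast_nonneg a
  have hb0 : (0 : ℝ) ≤ b := Nat.cast_nonneg b
  constructor
  · by_contra! hD
    nlinarith [sq_nonneg ((a : ℝ) - b)]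
  · intro hD
    have hsq : ((a : ℝ) - b) ^ 2 ≤ 0 := by nlinarith
    have hab : (a : ℝ) = b := by
      have := pow_eq_zero_iff (two_ne_zero) |>.1 (hsq.antisymm (sq_nonneg _))
      linarith
    have har : (a : ℝ) + 1 = r := by
      rw [← hab] at h2' h3'
      nlinarith
    refine ⟨by exact_mod_cast congrArg (fun x : ℝ ↦ x + 1) hab, ?_, ?_⟩
    · have : (m : ℝ) = (a + 1) * (a + 1) := by rw [har, hr2]
      exact_mod_cast this
    · have : (o : ℝ) = a * b := by rw [← hab]; nlinarith
      exact_mod_cast this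

open scoped Classical in
theorem sum_degree_skeleton :
    ∑ e ∈ G.edgeFinset, (skeleton G).degree e = 2 * #(skeleton G).edgeFinset := by
  rw [← sum_degrees_eq_twice_card_edges]
  refine sum_subset (subset_univ _) fun e _ he ↦ ?_
  rw [← card_neighborFinset_eq_degree, card_eq_zero, Finset.eq_empty_iff_forall_notMem]
  exact fun f hf ↦ he (mem_edgeFinset.2 ((mem_neighborFinset _ _ _).1 hf).1)

open scoped Classical in
theorem iso_of_bipartition {r : ℕ} {p : V → Prop} (hp : Fintype.card {x // p x} = r)
    (hp' : Fintype.card {x // ¬ p x} = r) (hadj : ∀ x y, G.Adj x y ↔ ¬ (p x ↔ p y)) :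
    Nonempty (G ≃g completeBipartiteGraph (Fin r) (Fin r)) := by
  let e := (Equiv.sumCompl p).symm.trans
    (Equiv.sumCongr (Fintype.equivFinOfCardEq hp) (Fintype.equivFinOfCardEq hp'))
  have hleft : ∀ x, (e x).isLeft ↔ p x := by
    intro x
    by_cases hx : p x <;> simp [e, hx]
  refine ⟨⟨e, fun {x y} ↦ ?_⟩⟩
  simp only [completeBipartiteGraph_adj, hadj, ← Sum.not_isLeft, hleft]
  tauto

open scoped Classical in
theorem iso_completeBipartiteGraph_of_card {i j : V} (h : G.Adj i j) (hiso : ∀ v, ∃ w, G.Adj v w)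
    (hdeg : G.degree i = G.degree j) (hcard : #G.edgeFinset = G.degree i * G.degree i)
    (hopp : #(oppositeEdges G s(i, j)) = (G.degree i - 1) * (G.degree j - 1)) :
    Nonempty (G ≃g completeBipartiteGraph (Fin (G.degree i)) (Fin (G.degree i))) := by
  have hall : ∀ k l, G.Adj i k → G.Adj j l → G.Adj k l := by
    intro k l hik hjl
    by_cases hkj : k = j
    · rwa [hkj]
    by_cases hli : l = i
    · exact hli ▸ hik.symm
    rw [← card_erase_product h] at hopp
    have := (card_filter_eq_iff.1 ((card_filter_le _ _).antisymm
      (hopp ▸ card_oppositeEdges_le_card_filter)))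
    exact this (k, l) (by simp [hkj, hli, hik, hjl])
  have hdisj : ∀ k, G.Adj i k → ¬ G.Adj j k := fun k hik hjk ↦ (hall k k hik hjk).ne rfl
  have himage : (G.neighborFinset i ×ˢ G.neighborFinset j).image (fun p ↦ s(p.1, p.2)) =
      G.edgeFinset := by
    apply Finset.eq_of_subset_of_card_le
    · simp only [Finset.image_subset_iff, Finset.mem_product, mem_neighborFinset,
        mem_edgeFinset, mem_edgeSet]
      exact fun p hp ↦ hall _ _ hp.1 hp.2
    · rw [Finset.card_image_of_injOn, card_product, card_neighborFinset_eq_degree,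
        card_neighborFinset_eq_degree, ← hdeg, hcard]
      rintro ⟨k, l⟩ hp ⟨k', l'⟩ hp' heq
      simp only [coe_product, mem_prod, SetLike.mem_coe, mem_neighborFinset] at hp hp'
      have := hdisj k hp.1
      have := Sym2.eq_iff.1 heq
      grind
  have hedge : ∀ x y, G.Adj x y → G.Adj i x ∧ G.Adj j y ∨ G.Adj i y ∧ G.Adj j x := by
    intro x y hxy
    rw [← mem_edgeSet, ← mem_edgeFinset, ← himage, Finset.mem_image] at hxy
    obtain ⟨⟨k, l⟩, hp, heq⟩ := hxy
    simp only [Finset.mem_product, mem_neighborFinset] at hp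
    have := Sym2.eq_iff.1 heq
    grind
  have hside : ∀ x, ¬ G.Adj i x ↔ G.Adj j x := by
    intro x
    obtain ⟨y, hy⟩ := hiso x
    have := hedge x y hy
    have := hdisj x
    tauto
  refine iso_of_bipartition (p := G.Adj i) (G.card_neighborSet_eq_degree i) ?_ fun x y ↦ ?_
  · rw [hdeg, ← G.card_neighborSet_eq_degree j]
    exact Fintype.card_congr (Equiv.subtypeEquivRight hside)
  · have h1 := hedge x y
    have h2 := hall x y
    have h3 := hall y x
    have h4 := hside x
    have h5 := hside y
    have h6 := G.adj_comm x y
    tauto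

open scoped Classical in
theorem card_edgeFinset_skeleton_of_iso {m : ℕ}
    (φ : G ≃g completeBipartiteGraph (Fin m) (Fin m)) :
    #G.edgeFinset = m * m ∧ #(skeleton G).edgeFinset + m * m = m * m * m := by
  have hadj : ∀ x y, G.Adj x y ↔ (φ x).isLeft ≠ (φ y).isLeft := by
    intro x y
    rw [← φ.map_adj_iff, completeBipartiteGraph_adj]
    rcases φ x with _ | _ <;> rcases φ y with _ | _ <;> simp
  have hdeg : ∀ x, G.degree x = m := by
    intro x
    rw [← φ.degree_eq, ← card_neighborFinset_eq_degree]
    rcases φ x with a | a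
    · have : (completeBipartiteGraph (Fin m) (Fin m)).neighborFinset (Sum.inl a) =
          univ.map Function.Embedding.inr := by
        ext (y | y) <;> simp
      rw [this, card_map, card_univ, Fintype.card_fin]
    · have : (completeBipartiteGraph (Fin m) (Fin m)).neighborFinset (Sum.inr a) =
          univ.map Function.Embedding.inl := by
        ext (y | y) <;> simp
      rw [this, card_map, card_univ, Fintype.card_fin]
  have hcard : #G.edgeFinset = m * m := by
    have h1 := G.sum_degrees_eq_twice_card_edges
    have h2 : Fintype.card V = m + m := by
      rw [Fintype.card_congr φ.toEquiv, Fintype.card_sum, Fintype.card_fin]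
    simp only [hdeg, sum_const, card_univ, h2, smul_eq_mul] at h1
    linarith
  refine ⟨hcard, ?_⟩
  have hD : ∀ e ∈ G.edgeFinset, (skeleton G).degree e + 2 = 2 * m := by
    intro e he
    rw [mem_edgeFinset] at he
    have h1 := degree_skeleton_add he
    induction e with | h i j =>
    have h2 := card_sdiff_incidenceFinset_union (G := G) he
    have h3 : oppositeEdges G s(i, j) =
        G.edgeFinset \ (G.incidenceFinset i ∪ G.incidenceFinset j) := by
      refine oppositeEdges_subset.antisymm fun f hf ↦ ?_
      induction f with | h k l =>
      simp only [Finset.mem_sdiff, Finset.mem_union, mem_incidenceFinset, mk'_mem_incidenceSet_iff,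
        mem_edgeFinset, mem_edgeSet] at hf
      rw [oppositeEdges, Finset.mem_filter, mem_edgeFinset]
      refine ⟨hf.1, ?_⟩
      rw [mem_edgeSet] at he
      have hkl := hf.1
      rw [hadj] at he hkl
      by_cases hik : (φ i).isLeft = (φ k).isLeft
      · exact ⟨i, j, l, k, rfl, Sym2.eq_swap, (hadj _ _).2 (by grind), (hadj _ _).2 (by grind),
          by grind, by grind⟩
      · exact ⟨i, j, k, l, rfl, rfl, (hadj _ _).2 (by grind), (hadj _ _).2 (by grind),
          by grind, by grind⟩
    rw [← h3, hdeg, hdeg] at h2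
    omega
  have hsum := sum_congr rfl hD
  rw [sum_add_distrib, sum_degree_skeleton, sum_const, sum_const, hcard, smul_eq_mul,
    smul_eq_mul] at hsum
  linarith

end Counting

end EdgePolytope

/-- If `f₀` and `f₁` denote the number of vertices resp. edges of the edge polytope
`P(G)` of a graph `G` with no isolated vertices, then `f₀^(3/2) - f₀ ≤ f₁`, with
equality if and only if `G` is a complete bipartite graph with parts of equal size. -/
theorem f1_lower_bound {n : ℕ} (G : SimpleGraph (Fin n))
    (hiso : ∀ v : Fin n, ∃ w : Fin n, G.Adj v w) :
    (faceCount (edgePolytope G) 0 : ℝ) ^ ((3 : ℝ) / 2) - (faceCount (edgePolytope G) 0 : ℝ)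
        ≤ (faceCount (edgePolytope G) 1 : ℝ) ∧
      ((faceCount (edgePolytope G) 0 : ℝ) ^ ((3 : ℝ) / 2)
            - (faceCount (edgePolytope G) 0 : ℝ) = (faceCount (edgePolytope G) 1 : ℝ) ↔
        ∃ m : ℕ, Nonempty (G ≃g completeBipartiteGraph (Fin m) (Fin m))) := by
  classical
  rw [EdgePolytope.faceCount_zero, EdgePolytope.faceCount_one, ← SimpleGraph.coe_edgeFinset G,
    ← SimpleGraph.coe_edgeFinset (EdgePolytope.skeleton G), ncard_coe_finset, ncard_coe_finset]
  set m := G.edgeFinset.card with hm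
  have hpow : (m : ℝ) ^ ((3 : ℝ) / 2) = m * √(m : ℝ) := by
    rw [Real.sqrt_eq_rpow, show (3 : ℝ) / 2 = 1 + 1 / 2 by norm_num,
      Real.rpow_add_of_nonneg (Nat.cast_nonneg m) zero_le_one (by norm_num), Real.rpow_one]
  rw [hpow]
  have hdeg : ∀ e ∈ G.edgeFinset, 2 * √(m : ℝ) - 2 ≤ ((EdgePolytope.skeleton G).degree e : ℝ) := by
    intro e he
    induction e with | h i j =>
    exact (EdgePolytope.two_sqrt_sub_two_le_degree_skeleton (SimpleGraph.mem_edgeFinset.1 he)).1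
  have hsum : ∑ e ∈ G.edgeFinset, ((EdgePolytope.skeleton G).degree e : ℝ) =
      2 * (EdgePolytope.skeleton G).edgeFinset.card := by
    exact_mod_cast EdgePolytope.sum_degree_skeleton (G := G)
  have hconst : ∑ _e ∈ G.edgeFinset, (2 * √(m : ℝ) - 2) = m * (2 * √(m : ℝ) - 2) := by
    rw [Finset.sum_const, nsmul_eq_mul]
  refine ⟨?_, ?_, ?_⟩
  · have := Finset.sum_le_sum hdeg
    rw [hsum, hconst] at this
    linarith
  · intro heq
    rcases isEmpty_or_nonempty (Fin n) with hn | ⟨⟨i⟩⟩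
    · exact ⟨0, ⟨⟨Equiv.equivOfIsEmpty _ _, fun {x} ↦ isEmptyElim x⟩⟩⟩
    obtain ⟨j, hij⟩ := hiso i
    have hall := (Finset.sum_eq_sum_iff_of_le hdeg).1 (by rw [hsum, hconst]; linarith)
    obtain ⟨h1, h2, h3⟩ := (EdgePolytope.two_sqrt_sub_two_le_degree_skeleton hij).2
      (hall s(i, j) (SimpleGraph.mem_edgeFinset.2 hij)).symm
    exact ⟨_, EdgePolytope.iso_completeBipartiteGraph_of_card hij hiso h1 h2 h3⟩
  · rintro ⟨k, ⟨φ⟩⟩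
    obtain ⟨h1, h2⟩ := EdgePolytope.card_edgeFinset_skeleton_of_iso φ
    have h2' : ((EdgePolytope.skeleton G).edgeFinset.card : ℝ) + k * k = k * k * k := by
      exact_mod_cast h2
    rw [hm, h1, Nat.cast_mul, Real.sqrt_mul_self (Nat.cast_nonneg k)]
    linarith
end

section
/- Let k ≥ 2 and let G be a finite simple graph with no isolated vertices and at least k edges. The edge polytope P(G) is k-neighborly if and only if every subgraph H of G with at most 2k vertices has the property that every cycle of H is odd and every connected component of H contains at most one cycle. -/
open Set

/-- A polytope `P` is `k`-neighborly if every set of at most `k` of its vertices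
(extreme points) is the vertex set of a face of `P`, a face being the intersection of
`P` with a supporting hyperplane (`IsExposed`), together with `∅` and `P` itself. -/
def KNeighborly {n : ℕ} (P : Set (Fin n → ℝ)) (k : ℕ) : Prop :=
  ∀ S : Set (Fin n → ℝ), S ⊆ Set.extremePoints ℝ P → S.Finite → S.ncard ≤ k →
    ∃ F : Set (Fin n → ℝ), IsExposed ℝ P F ∧ F ∩ Set.extremePoints ℝ P = S

/-- Every cycle of `H` is odd, and every connected component of `H` contains at most
one cycle (any two cycles lying in the same component have the same edge set). -/
def CactusLike {V : Type*} (H : SimpleGraph V) : Prop :=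
  (∀ (v : V) (c : H.Walk v v), c.IsCycle → Odd c.length) ∧
  (∀ (u v : V) (c : H.Walk u u) (d : H.Walk v v), c.IsCycle → d.IsCycle →
    H.Reachable u v → ∀ e : Sym2 V, e ∈ c.edges ↔ e ∈ d.edges)

/-- Every edge `s(u, v)` of `H` admits a vertex weighting whose edge sums vanish on all other
edges but not on `s(u, v)`; dually, the edge vectors of `H` are linearly independent. -/
def EdgeSeparable {V : Type*} (H : SimpleGraph V) : Prop :=
  ∀ u v, H.Adj u v → ∃ w : V → ℝ, w u + w v ≠ 0 ∧
    ∀ x y, (H.deleteEdges {s(u, v)}).Adj x y → w x + w y = 0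

section Graph

open SimpleGraph

variable {V : Type*} {H : SimpleGraph V}

theorem weight_end_of_walk {w : V → ℝ} (hw : ∀ x y, H.Adj x y → w x + w y = 0) {x y : V}
    (p : H.Walk x y) : w y = (-1) ^ p.length * w x := by
  induction p with
  | nil => simp
  | cons h p ih =>
    rw [ih, Walk.length_cons, pow_succ]
    linear_combination (-1) ^ p.length * hw _ _ h

theorem reachable_deleteEdges_of_reachable {a b u v : V}
    (hab : (H.deleteEdges {s(a, b)}).Reachable a b) (h : H.Reachable u v) :
    (H.deleteEdges {s(a, b)}).Reachable u v := by
  obtain ⟨p⟩ := h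
  induction p with
  | nil => exact .rfl
  | @cons x y z h p ih =>
    refine Reachable.trans ?_ ih
    by_cases he : s(x, y) = s(a, b)
    · rcases Sym2.eq_iff.1 he with ⟨rfl, rfl⟩ | ⟨rfl, rfl⟩
      · exact hab
      · exact hab.symm
    · exact Adj.reachable (by simp [h, he])

theorem EdgeSeparable.odd_length_of_isCycle (hH : EdgeSeparable H) {v : V} {c : H.Walk v v}
    (hc : c.IsCycle) : Odd c.length := by
  by_contra hodd
  cases c with
  | nil => simp at hc
  | @cons _ u _ h p =>
    obtain ⟨w, hne, hw⟩ := hH _ _ h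
    have he := ((Walk.cons_isCycle_iff p h).1 hc).2
    have hend := weight_end_of_walk hw (p.toDeleteEdge _ he)
    have hp : Odd p.length := by
      rw [Walk.length_cons] at hodd
      grind
    rw [Walk.length_transfer, hp.neg_one_pow] at hend
    exact hne (by rw [hend]; ring)

theorem EdgeSeparable.mem_edges_of_isCycle (hH : EdgeSeparable H) {u v : V} {c : H.Walk u u}
    {d : H.Walk v v} (hc : c.IsCycle) (hd : d.IsCycle) (huv : H.Reachable u v) {e : Sym2 V}
    (he : e ∈ d.edges) : e ∈ c.edges := by
  classical
  by_contra hec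
  induction e with
  | h a b =>
    obtain ⟨w, hne, hw⟩ := hH _ _ (d.adj_of_mem_edges he)
    have hab := (adj_and_reachable_delete_edges_iff_exists_cycle.2 ⟨v, d, hd, he⟩).2
    have hu : w u = 0 := by
      have hend := weight_end_of_walk hw (c.toDeleteEdge _ hec)
      rw [Walk.length_transfer, (hH.odd_length_of_isCycle hc).neg_one_pow] at hend
      linarith
    have hzero : ∀ x, H.Reachable u x → w x = 0 := fun x hx => by
      obtain ⟨p⟩ := reachable_deleteEdges_of_reachable hab hx
      rw [weight_end_of_walk hw p, hu, mul_zero]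
    have ha : H.Reachable u a :=
      huv.trans ⟨d.takeUntil a (d.fst_mem_support_of_mem_edges he)⟩
    exact hne (by rw [hzero a ha, hzero b (ha.trans (d.adj_of_mem_edges he).reachable), add_zero])

/-- A component without cycles carries an alternating `±1` weighting. -/
theorem exists_alternating_weight {u : V}
    (hu : ∀ x (c : H.Walk x x), c.IsCycle → ¬ H.Reachable u x) :
    ∃ w : V → ℝ, w u = 1 ∧ (∀ x, ¬ H.Reachable u x → w x = 0) ∧
      ∀ x y, H.Adj x y → w x + w y = 0 := by
  classical
  let K : SimpleGraph V :=
    { Adj := fun x y => H.Adj x y ∧ H.Reachable u x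
      symm := ⟨fun x y h => ⟨h.1.symm, h.2.trans h.1.reachable⟩⟩
      loopless := ⟨fun x h => h.1.ne rfl⟩ }
  have hKH : K ≤ H := fun x y h => h.1
  have hK : K.IsAcyclic := fun x c hc => by
    refine hu x (c.mapLe hKH) (hc.mapLe hKH) ?_
    cases c with
    | nil => simp at hc
    | cons h p => exact h.2
  obtain ⟨col⟩ := hK.colorable_two
  refine ⟨fun x => if H.Reachable u x then (if col x = col u then 1 else -1) else 0,
    by simp, fun x hx => by simp [hx], fun x y hxy => ?_⟩
  by_cases hx : H.Reachable u x
  · have hy : H.Reachable u y := hx.trans hxy.reachable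
    have hne : col x ≠ col y := col.valid (show K.Adj x y from ⟨hxy, hx⟩)
    simp only [hx, hy, if_true]
    split_ifs <;> first | omega | norm_num
  · have hy : ¬ H.Reachable u y := fun h => hx (h.trans hxy.symm.reachable)
    simp [hx, hy]

theorem CactusLike.edgeSeparable (hH : CactusLike H) : EdgeSeparable H := by
  classical
  intro a b hab
  have hle : H.deleteEdges {s(a, b)} ≤ H := H.deleteEdges_le _
  by_cases hr : (H.deleteEdges {s(a, b)}).Reachable a b
  · obtain ⟨p, hp⟩ := hr.exists_isPath
    have hpe : s(b, a) ∉ (p.mapLe hle).edges := by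
      rw [Walk.edges_mapLe_eq_edges]
      intro h
      simpa using p.adj_of_mem_edges h
    have hcyc := (Walk.cons_isCycle_iff (p.mapLe hle) hab.symm).2 ⟨hp.mapLe hle, hpe⟩
    obtain ⟨w, hwa, -, hw⟩ := exists_alternating_weight (H := H.deleteEdges {s(a, b)}) (u := a)
      fun x c hc hax => by
        have h := (hH.2 b x _ _ hcyc (hc.mapLe hle)
          (hab.symm.reachable.trans (hax.mono hle)) s(b, a)).1 (by simp)
        rw [Walk.edges_mapLe_eq_edges] at h
        simpa using c.adj_of_mem_edges h
    refine ⟨w, ?_, hw⟩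
    have hodd := hH.1 _ _ hcyc
    rw [Walk.length_cons, Walk.length_mapLe] at hodd
    have heven : Even p.length := by grind
    rw [weight_end_of_walk hw p, heven.neg_one_pow, hwa]
    norm_num
  · by_cases ha : ∀ x (c : (H.deleteEdges {s(a, b)}).Walk x x), c.IsCycle →
        ¬ (H.deleteEdges {s(a, b)}).Reachable a x
    · obtain ⟨w, hwa, hw0, hw⟩ := exists_alternating_weight ha
      exact ⟨w, by rw [hwa, hw0 b hr]; norm_num, hw⟩
    · have hb : ∀ x (c : (H.deleteEdges {s(a, b)}).Walk x x), c.IsCycle →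
          ¬ (H.deleteEdges {s(a, b)}).Reachable b x := fun y d hd hby => by
        push Not at ha
        obtain ⟨x, c, hc, hax⟩ := ha
        have hiff := hH.2 x y _ _ (hc.mapLe hle) (hd.mapLe hle)
          ((hax.mono hle).symm.trans (hab.reachable.trans (hby.mono hle)))
        cases c with
        | nil => simp at hc
        | @cons _ z _ h p =>
          have hmem := (hiff s(x, z)).1 (by simp)
          rw [Walk.edges_mapLe_eq_edges] at hmem
          exact hr (hax.trans ((hby.trans
            ⟨d.takeUntil x (d.fst_mem_support_of_mem_edges hmem)⟩).symm))
      obtain ⟨w, hwb, hw0, hw⟩ := exists_alternating_weight hb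
      exact ⟨w, by rw [hwb, hw0 a fun h => hr h.symm]; norm_num, hw⟩

theorem cactusLike_iff_edgeSeparable : CactusLike H ↔ EdgeSeparable H :=
  ⟨CactusLike.edgeSeparable, fun hH => ⟨fun _ _ hc => hH.odd_length_of_isCycle hc,
    fun _ _ _ _ hc hd huv _ => ⟨fun he => hH.mem_edges_of_isCycle hd hc huv.symm he,
      fun he => hH.mem_edges_of_isCycle hc hd huv he⟩⟩⟩

end Graph

section EdgeVectors

variable {n k : ℕ} {G : SimpleGraph (Fin n)}

/-- The vertex of the edge polytope given by an edge: the indicator vector of its ends. -/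
def edgeVec (e : Sym2 (Fin n)) : Fin n → ℝ := fun i => if i ∈ e then 1 else 0

theorem edgeVec_mk {i j : Fin n} (h : i ≠ j) :
    edgeVec s(i, j) = Pi.single i 1 + Pi.single j 1 := by
  ext a
  simp only [edgeVec, Sym2.mem_iff, Pi.add_apply, Pi.single_apply]
  grind

theorem edgeVec_injective : Function.Injective (edgeVec (n := n)) := fun e f h => by
  refine Sym2.ext fun i => ?_
  have hi := congrFun h i
  simp only [edgeVec] at hi
  split_ifs at hi <;> simp_all

theorem edgePolytope_eq_convexHull_image :
    edgePolytope G = convexHull ℝ (edgeVec '' G.edgeSet) := by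
  unfold edgePolytope
  congr 1
  ext x
  constructor
  · rintro ⟨i, j, h, rfl⟩
    exact ⟨s(i, j), h, edgeVec_mk h.ne⟩
  · rintro ⟨e, he, rfl⟩
    induction e with
    | h i j => exact ⟨i, j, he, edgeVec_mk (G.ne_of_adj he)⟩

theorem extremePoints_edgePolytope :
    (edgePolytope G).extremePoints ℝ = edgeVec '' G.edgeSet := by
  rw [edgePolytope_eq_convexHull_image]
  refine Subset.antisymm extremePoints_convexHull_subset ?_
  have hcube : convexHull ℝ (edgeVec '' G.edgeSet) ⊆ univ.pi fun _ : Fin n => Icc (0 : ℝ) 1 := by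
    refine convexHull_min ?_ (convex_pi fun _ _ => convex_Icc 0 1)
    rintro _ ⟨e, -, rfl⟩ i -
    simp only [edgeVec]
    split_ifs <;> simp
  rintro _ ⟨e, he, rfl⟩
  refine inter_extremePoints_subset_extremePoints_of_subset hcube
    ⟨subset_convexHull ℝ _ ⟨e, he, rfl⟩, ?_⟩
  rw [extremePoints_pi]
  intro i _
  rw [mem_extremePoints_iff_left]
  simp only [edgeVec, openSegment_eq_image, mem_image, mem_Icc, mem_Ioo]
  refine ⟨by split_ifs <;> simp, ?_⟩
  rintro x ⟨hx0, hx1⟩ y ⟨hy0, hy1⟩ ⟨t, ⟨ht0, ht1⟩, ht⟩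
  simp only [smul_eq_mul] at ht
  split_ifs at ht ⊢
  · nlinarith
  · nlinarith

theorem exists_dual_edgeVec (w : Fin n → ℝ) :
    ∃ l : StrongDual ℝ (Fin n → ℝ), ∀ i j, i ≠ j → l (edgeVec s(i, j)) = w i + w j := by
  refine ⟨∑ i, w i • ContinuousLinearMap.proj i, fun i j h => ?_⟩
  simp [edgeVec_mk h, mul_add, Finset.sum_add_distrib, Pi.single_apply]

theorem exists_sum_dual :
    ∃ l : StrongDual ℝ (Fin n → ℝ), ∀ e ∈ G.edgeSet, l (edgeVec e) = 1 := by
  obtain ⟨l, hl⟩ := exists_dual_edgeVec (n := n) fun _ => 1 / 2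
  refine ⟨l, fun e he => ?_⟩
  induction e with
  | h i j => rw [hl i j (G.ne_of_adj he)]; norm_num

/-- `k`-neighborliness of an edge polytope in terms of functionals on edge vectors. -/
theorem kNeighborly_edgePolytope_iff :
    KNeighborly (edgePolytope G) k ↔ ∀ S ⊆ G.edgeSet, S.ncard ≤ k →
      ∃ l : StrongDual ℝ (Fin n → ℝ), (∀ e ∈ S, l (edgeVec e) = 0) ∧
        ∀ e ∈ G.edgeSet, e ∉ S → l (edgeVec e) < 0 := by
  obtain ⟨σ, hσ⟩ := exists_sum_dual (G := G)
  have hmem : ∀ e ∈ G.edgeSet, edgeVec e ∈ edgePolytope G := fun e he => by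
    rw [edgePolytope_eq_convexHull_image]
    exact subset_convexHull ℝ _ ⟨e, he, rfl⟩
  constructor
  · intro h S hS hk
    rcases S.eq_empty_or_nonempty with rfl | ⟨e₀, he₀⟩
    · exact ⟨-σ, by simp, fun e he _ => by simp [hσ e he]⟩
    obtain ⟨F, hF, hFS⟩ := h (edgeVec '' S) (by
      rw [extremePoints_edgePolytope]; exact image_mono hS) (toFinite _)
      (by rwa [ncard_image_of_injective _ edgeVec_injective])
    rw [extremePoints_edgePolytope] at hFS
    have hSF : ∀ e ∈ S, edgeVec e ∈ F := fun e he => (hFS.symm.subset ⟨e, he, rfl⟩).1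
    obtain ⟨l, rfl⟩ := hF ⟨_, hSF e₀ he₀⟩
    have hle : ∀ e ∈ G.edgeSet, l (edgeVec e) ≤ l (edgeVec e₀) := fun e he =>
      (hSF e₀ he₀).2 _ (hmem e he)
    refine ⟨l - l (edgeVec e₀) • σ, fun e he => ?_, fun e he heS => ?_⟩
    · have h1 := (hSF e he).2 _ (hmem e₀ (hS he₀))
      have h2 := hle e (hS he)
      simp [hσ e (hS he), le_antisymm h2 h1]
    · simp only [sub_apply, smul_apply, hσ e he, smul_eq_mul, mul_one, sub_neg]
      refine lt_of_le_of_ne (hle e he) fun heq => heS ?_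
      obtain ⟨f, hf, hfe⟩ := hFS.subset
        ⟨⟨hmem e he, fun y hy => heq ▸ (hSF e₀ he₀).2 y hy⟩, ⟨e, he, rfl⟩⟩
      rwa [← edgeVec_injective hfe]
  · intro h S' hS' _ hk
    rw [extremePoints_edgePolytope] at hS' ⊢
    obtain ⟨S, hS, rfl⟩ := subset_image_iff.1 hS'
    rw [ncard_image_of_injective _ edgeVec_injective] at hk
    rcases S.eq_empty_or_nonempty with rfl | ⟨e₀, he₀⟩
    · exact ⟨∅, isExposed_empty, by simp⟩
    obtain ⟨l, hl0, hl⟩ := h S hS hk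
    have hle : ∀ x ∈ edgePolytope G, l x ≤ 0 := by
      rw [edgePolytope_eq_convexHull_image]
      refine fun x hx => convexHull_min (t := {x | l x ≤ 0}) ?_
        (convex_halfSpace_le l.toLinearMap.isLinear 0) hx
      rintro _ ⟨e, he, rfl⟩
      by_cases heS : e ∈ S
      · exact (hl0 e heS).le
      · exact (hl e he heS).le
    refine ⟨l.toExposed (edgePolytope G), ContinuousLinearMap.toExposed.isExposed, ?_⟩
    ext x
    constructor
    · rintro ⟨⟨-, hx⟩, e, he, rfl⟩
      refine ⟨e, ?_, rfl⟩
      by_contra heS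
      have h1 := hx _ (hmem e₀ (hS he₀))
      have h2 := hl e he heS
      rw [hl0 e₀ he₀] at h1
      linarith
    · rintro ⟨e, he, rfl⟩
      exact ⟨⟨hmem e (hS he), fun y hy => by rw [hl0 e he]; exact hle y hy⟩, e, hS he, rfl⟩

theorem KNeighborly.linearIndepOn_edgeVec (h : KNeighborly (edgePolytope G) k)
    (T : Finset (Sym2 (Fin n))) (hT : (T : Set (Sym2 (Fin n))) ⊆ G.edgeSet)
    (hcard : T.card ≤ 2 * k + 1) : LinearIndepOn ℝ edgeVec (T : Set (Sym2 (Fin n))) := by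
  rw [kNeighborly_edgePolytope_iff] at h
  obtain ⟨σ, hσ⟩ := exists_sum_dual (G := G)
  have key : ∀ g : Sym2 (Fin n) → ℝ, ∑ e ∈ T, g e • edgeVec e = 0 →
      (T.filter fun e => 0 < g e).card ≤ k → ∀ e ∈ T, g e = 0 := by
    intro g hg hk
    obtain ⟨l, hl0, hl⟩ := h (T.filter fun e => 0 < g e)
      (fun e he => hT (Finset.mem_filter.1 he).1) (by rwa [ncard_coe_finset])
    have hsum : ∑ e ∈ T, g e * l (edgeVec e) = 0 := by
      simpa using congrArg l hg
    have hterm : ∀ e ∈ T, 0 ≤ g e * l (edgeVec e) := fun e he => by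
      by_cases hpos : 0 < g e
      · rw [hl0 e (by simp [he, hpos]), mul_zero]
      · exact mul_nonneg_of_nonpos_of_nonpos (not_lt.1 hpos)
          (hl e (hT he) (by simp [hpos])).le
    have hnonneg : ∀ e ∈ T, 0 ≤ g e := fun e he => by
      by_contra hneg
      have h0 := (Finset.sum_eq_zero_iff_of_nonneg hterm).1 hsum e he
      have hlt := hl e (hT he) (by simp [(not_le.1 hneg).le])
      rcases mul_eq_zero.1 h0 with h0 | h0 <;> linarith
    have hsum' : ∑ e ∈ T, g e = 0 := by
      have hs := congrArg σ hg
      rw [map_sum, map_zero] at hs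
      rw [← hs]
      exact Finset.sum_congr rfl fun e he => by simp [hσ e (hT he)]
    exact (Finset.sum_eq_zero_iff_of_nonneg hnonneg).1 hsum'
  refine linearIndepOn_finset_iff.2 fun g hg => ?_
  by_cases hk : (T.filter fun e => 0 < g e).card ≤ k
  · exact key g hg hk
  · have hdisj : Disjoint (T.filter fun e => 0 < g e) (T.filter fun e => 0 < (-g) e) := by
      refine Finset.disjoint_filter.2 fun e _ h1 h2 => ?_
      rw [Pi.neg_apply] at h2
      linarith
    have hle := Finset.card_le_card (Finset.union_subset
      (T.filter_subset fun e => 0 < g e) (T.filter_subset fun e => 0 < (-g) e))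
    rw [Finset.card_union_of_disjoint hdisj] at hle
    intro e he
    simpa using key (-g) (by simpa using hg) (by omega) e he

theorem card_le_of_linearIndepOn_edgeVec {U : Finset (Fin n)} {T : Finset (Sym2 (Fin n))}
    (hT : ∀ e ∈ T, ¬ e.IsDiag ∧ ∀ v ∈ e, v ∈ U)
    (hli : LinearIndepOn ℝ edgeVec (T : Set (Sym2 (Fin n)))) : T.card ≤ U.card := by
  classical
  have hspan : Submodule.span ℝ (range fun e : (T : Set (Sym2 (Fin n))) => edgeVec (e : Sym2 _)) ≤
      Submodule.span ℝ (SetLike.coe (U.image fun i => (Pi.single i 1 : Fin n → ℝ))) := by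
    refine Submodule.span_le.2 ?_
    rintro _ ⟨⟨e, he⟩, rfl⟩
    obtain ⟨hd, hU⟩ := hT e he
    induction e with
    | h i j =>
      simp only [edgeVec_mk (show i ≠ j from hd)]
      refine Submodule.add_mem _ (Submodule.subset_span ?_) (Submodule.subset_span ?_)
      · exact Finset.mem_image_of_mem _ (hU i (by simp))
      · exact Finset.mem_image_of_mem _ (hU j (by simp))
  have h1 := finrank_span_eq_card hli
  have h2 := Submodule.finrank_mono hspan
  have h3 := finrank_span_finset_le_card (R := ℝ) (U.image fun i => (Pi.single i 1 : Fin n → ℝ))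
  rw [Set.finrank] at h3
  rw [h1] at h2
  simpa using h2.trans (h3.trans Finset.card_image_le)

theorem KNeighborly.linearIndepOn_edgeVec_induce (h : KNeighborly (edgePolytope G) k)
    {U : Finset (Fin n)} (hU : U.card ≤ 2 * k) :
    LinearIndepOn ℝ edgeVec {e | e ∈ G.edgeSet ∧ ∀ v ∈ e, v ∈ U} := by
  classical
  set T : Finset (Sym2 (Fin n)) := Finset.univ.filter fun e => e ∈ G.edgeSet ∧ ∀ v ∈ e, v ∈ U
  have hTE : {e | e ∈ G.edgeSet ∧ ∀ v ∈ e, v ∈ U} = (T : Set (Sym2 (Fin n))) := by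
    ext; simp [T]
  have hTG : ∀ e ∈ T, e ∈ G.edgeSet ∧ ∀ v ∈ e, v ∈ U := fun e he => by simpa [T] using he
  rw [hTE]
  refine h.linearIndepOn_edgeVec T (fun e he => (hTG e he).1) ?_
  by_contra hlt
  obtain ⟨T', hT', hcard⟩ := Finset.exists_subset_card_eq (not_le.1 hlt).le
  have hle := card_le_of_linearIndepOn_edgeVec (U := U) (T := T')
    (fun e he => ⟨G.not_isDiag_of_mem_edgeSet (hTG e (hT' he)).1, (hTG e (hT' he)).2⟩)
    (h.linearIndepOn_edgeVec T' (fun e he => (hTG e (hT' he)).1) hcard.le)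
  omega

theorem KNeighborly.edgeSeparable_coe (h : KNeighborly (edgePolytope G) k) (H : G.Subgraph)
    (hH : H.verts.ncard ≤ 2 * k) : EdgeSeparable H.coe := by
  classical
  intro u v huv
  have hli := h.linearIndepOn_edgeVec_induce (U := H.verts.toFinset)
    (by rwa [← ncard_eq_toFinset_card'])
  have hmem : ∀ x y, H.Adj x y →
      s(x, y) ∈ {e | e ∈ G.edgeSet ∧ ∀ v ∈ e, v ∈ H.verts.toFinset} := fun x y hxy => by
    simp [hxy.adj_sub, hxy.fst_mem, hxy.snd_mem]
  obtain ⟨f, hf, hker⟩ := Submodule.exists_le_ker_of_notMem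
    (linearIndepOn_iff_notMem_span.1 hli _ (hmem u v huv))
  have hf_mk : ∀ x y, H.Adj x y →
      f (edgeVec s(x, y)) = f (Pi.single x 1) + f (Pi.single y 1) := fun x y hxy => by
    rw [edgeVec_mk hxy.ne, map_add]
  refine ⟨fun x => f (Pi.single (x : Fin n) 1), by rwa [← hf_mk u v huv], fun x y hxy => ?_⟩
  rw [SimpleGraph.deleteEdges_adj] at hxy
  rw [← hf_mk x y hxy.1]
  refine hker (Submodule.subset_span ⟨_, ⟨hmem x y hxy.1, fun heq => hxy.2 ?_⟩, rfl⟩)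
  refine Sym2.map.injective Subtype.val_injective ?_
  simpa using heq

theorem exists_weight_of_edgeSeparable {U : Finset (Fin n)}
    (hsep : EdgeSeparable ((⊤ : G.Subgraph).induce (U : Set (Fin n))).coe)
    (S : Set (Sym2 (Fin n))) [DecidablePred (· ∈ S)] :
    ∃ w : Fin n → ℝ, ∀ x ∈ U, ∀ y ∈ U, G.Adj x y →
      w x + w y = if s(x, y) ∈ S then 0 else -1 := by
  classical
  have hsingle : ∀ e : Sym2 (Fin n), ∃ w : Fin n → ℝ, ∀ x ∈ U, ∀ y ∈ U, G.Adj x y →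
      w x + w y = if s(x, y) = e then 1 else 0 := by
    intro e
    by_cases he : ∃ u ∈ U, ∃ v ∈ U, G.Adj u v ∧ e = s(u, v)
    · obtain ⟨u, hu, v, hv, huv, rfl⟩ := he
      obtain ⟨w, hne, hw⟩ := hsep ⟨u, hu⟩ ⟨v, hv⟩ (by simp [huv, hu, hv])
      refine ⟨fun x => if hx : x ∈ U then w ⟨x, hx⟩ / (w ⟨u, hu⟩ + w ⟨v, hv⟩) else 0,
        fun x hx y hy hxy => ?_⟩
      simp only [hx, hy, dif_pos, ← add_div]
      split_ifs with heq
      · rcases Sym2.eq_iff.1 heq with ⟨rfl, rfl⟩ | ⟨rfl, rfl⟩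
        · exact div_self hne
        · rw [add_comm]; exact div_self hne
      · rw [hw ⟨x, hx⟩ ⟨y, hy⟩ (by
          simpa [hxy, hx, hy, Subtype.ext_iff] using heq), zero_div]
    · refine ⟨0, fun x hx y hy hxy => ?_⟩
      rw [if_neg fun heq => he ⟨x, hx, y, hy, hxy, heq.symm⟩]
      simp
  choose w hw using hsingle
  refine ⟨fun x => -∑ e ∈ Finset.univ.filter (· ∉ S), w e x, fun x hx y hy hxy => ?_⟩
  rw [← neg_add, ← Finset.sum_add_distrib,
    Finset.sum_congr rfl fun e _ => hw e x hx y hy hxy, Finset.sum_ite_eq]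
  simp only [Finset.mem_filter, Finset.mem_univ, true_and]
  split_ifs <;> simp_all

theorem card_biUnion_toFinset_le (T : Finset (Sym2 (Fin n))) :
    (T.biUnion Sym2.toFinset).card ≤ 2 * T.card := by
  rw [mul_comm]
  refine Finset.card_biUnion_le_card_mul _ _ _ fun e _ => ?_
  rw [Sym2.card_toFinset]
  split_ifs <;> norm_num

theorem kNeighborly_of_edgeSeparable
    (h : ∀ H : G.Subgraph, H.verts.ncard ≤ 2 * k → EdgeSeparable H.coe) :
    KNeighborly (edgePolytope G) k := by
  classical
  refine kNeighborly_edgePolytope_iff.2 fun S hS hk => ?_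
  set U : Finset (Fin n) := S.toFinset.biUnion Sym2.toFinset
  have hSU : ∀ e ∈ S, ∀ v ∈ e, v ∈ U := fun e he v hv =>
    Finset.mem_biUnion.2 ⟨e, by simpa using he, by simpa using hv⟩
  obtain ⟨w, hw⟩ := exists_weight_of_edgeSeparable (U := U) (h _ (by
    rw [SimpleGraph.Subgraph.induce_verts, ncard_coe_finset]
    refine (card_biUnion_toFinset_le _).trans (Nat.mul_le_mul_left 2 ?_)
    rwa [← ncard_eq_toFinset_card'])) S
  set M : ℝ := 1 + ∑ i, |w i|
  have hM : ∀ i, w i < M := fun i => by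
    have hi := Finset.single_le_sum (f := fun i => |w i|) (fun i _ => abs_nonneg _)
      (Finset.mem_univ i)
    have := le_abs_self (w i)
    linarith
  have hM0 : 0 < M := by positivity
  obtain ⟨l, hl⟩ := exists_dual_edgeVec fun i => if i ∈ U then w i else -M
  refine ⟨l, fun e he => ?_, fun e he heS => ?_⟩
  · induction e with
    | h x y =>
      have hx := hSU _ he x (by simp)
      have hy := hSU _ he y (by simp)
      rw [hl x y (G.ne_of_adj (hS he)), if_pos hx, if_pos hy, hw x hx y hy (hS he), if_pos he]
  · induction e with
    | h x y =>
      rw [hl x y (G.ne_of_adj he)]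
      split_ifs with hx hy hy
      · rw [hw x hx y hy he, if_neg heS]
        norm_num
      · linarith [hM x]
      · linarith [hM y]
      · linarith

end EdgeVectors

/-- For `k ≥ 2` and a graph `G` with no isolated vertices and at least `k` edges,
the edge polytope `P(G)` is `k`-neighborly if and only if every subgraph of `G`
with at most `2k` vertices has only odd cycles and at most one cycle per connected
component. -/
theorem kNeighborly_iff {n k : ℕ} (hk : 2 ≤ k) (G : SimpleGraph (Fin n))
    (hiso : ∀ v : Fin n, ∃ w : Fin n, G.Adj v w)
    (hE : k ≤ G.edgeSet.ncard) :
    KNeighborly (edgePolytope G) k ↔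
      ∀ H : G.Subgraph, H.verts.ncard ≤ 2 * k → CactusLike H.coe := by
  simp_rw [cactusLike_iff_edgeSeparable]
  exact ⟨fun h H hH => h.edgeSeparable_coe H hH, kNeighborly_of_edgeSeparable⟩
end

section
/- For every integer d > 0 there exists a finite connected simple graph G with no isolated vertices such that dim(P(G)) = d and the edge polytope P(G) has more than 4^{⌊d/3⌋} facets. -/
open Set

open Module in
/-- The dimension of `P` is the codimension of the space of functionals constant on `P`. -/
lemma polyDim_add_finrank_eq {n : ℕ} (P : Set (Fin n → ℝ)) (U : Submodule ℝ (Fin n → ℝ))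
    (hU : ∀ y, y ∈ U ↔ ∀ x ∈ P, ∀ x' ∈ P, y ⬝ᵥ x = y ⬝ᵥ x') :
    polyDim P + finrank ℝ U = n := by
  have h : (vectorSpan ℝ P).dualAnnihilator =
      U.map (dotProductEquiv ℝ (Fin n)).toLinearMap := by
    ext φ
    obtain ⟨y, rfl⟩ := (dotProductEquiv ℝ (Fin n)).surjective φ
    have hmap : dotProductEquiv ℝ (Fin n) y ∈ U.map (dotProductEquiv ℝ (Fin n)).toLinearMap ↔
        y ∈ U := by
      constructor
      · rintro ⟨z, hz, hzy⟩
        rwa [← (dotProductEquiv ℝ (Fin n)).injective hzy]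
      · exact fun hy => ⟨y, hy, rfl⟩
    rw [hmap, hU, Submodule.mem_dualAnnihilator]
    constructor
    · intro hy x hx x' hx'
      have := hy (x - x') (vsub_mem_vectorSpan ℝ hx hx')
      simpa [dotProduct_sub, sub_eq_zero] using this
    · intro hy v hv
      rw [vectorSpan_def] at hv
      induction hv using Submodule.span_induction with
      | mem v hv =>
        obtain ⟨x, hx, x', hx', rfl⟩ := hv
        simpa [dotProduct_sub, sub_eq_zero] using hy x hx x' hx'
      | zero => simp
      | add v v' _ _ h h' => rw [map_add, h, h', add_zero]
      | smul a v _ h => rw [map_smul, h, smul_zero]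
  have h' := Subspace.finrank_add_finrank_dualAnnihilator_eq (vectorSpan ℝ P)
  rw [h, LinearEquiv.finrank_map_eq, finrank_fin_fun] at h'
  exact h'

lemma dotProduct_edge {n : ℕ} (y : Fin n → ℝ) (i j : Fin n) :
    y ⬝ᵥ (Pi.single i 1 + Pi.single j 1) = y i + y j := by
  simp [dotProduct_add]

lemma edge_mem_edgePolytope {n : ℕ} {G : SimpleGraph (Fin n)} {i j : Fin n} (h : G.Adj i j) :
    Pi.single i 1 + Pi.single j 1 ∈ edgePolytope G :=
  subset_convexHull ℝ _ ⟨i, j, h, rfl⟩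

lemma le_dotProduct_of_mem_edgePolytope {n : ℕ} {G : SimpleGraph (Fin n)} {y : Fin n → ℝ} {c : ℝ}
    (hy : ∀ i j, G.Adj i j → c ≤ y i + y j) {x : Fin n → ℝ} (hx : x ∈ edgePolytope G) :
    c ≤ y ⬝ᵥ x := by
  have hconv : Convex ℝ {x : Fin n → ℝ | c ≤ dotProductEquiv ℝ (Fin n) y x} :=
    convex_halfSpace_ge (dotProductEquiv ℝ (Fin n) y).isLinear c
  refine convexHull_min ?_ hconv hx
  rintro _ ⟨i, j, hij, rfl⟩
  simpa [dotProduct_add] using hy i j hij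

lemma one_dotProduct_of_mem_edgePolytope {n : ℕ} {G : SimpleGraph (Fin n)} {x : Fin n → ℝ}
    (hx : x ∈ edgePolytope G) : (1 : Fin n → ℝ) ⬝ᵥ x = 2 := by
  apply le_antisymm
  · have := le_dotProduct_of_mem_edgePolytope (y := -1) (c := -2)
      (fun i j _ => by norm_num) hx
    rw [neg_dotProduct] at this
    linarith
  · exact le_dotProduct_of_mem_edgePolytope (fun i j _ => by norm_num) hx

lemma finite_edges {n : ℕ} (G : SimpleGraph (Fin n)) :
    {x : Fin n → ℝ | ∃ i j : Fin n, G.Adj i j ∧ x = Pi.single i 1 + Pi.single j 1}.Finite := by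
  refine (Set.finite_range
    fun p : Fin n × Fin n => (Pi.single p.1 1 + Pi.single p.2 1 : Fin n → ℝ)).subset ?_
  rintro _ ⟨i, j, -, rfl⟩
  exact ⟨(i, j), rfl⟩

/-- The convex hull of a finite set has finitely many exposed faces. -/
lemma finite_isExposed_convexHull {E : Type*} [AddCommGroup E] [Module ℝ E] [TopologicalSpace E]
    [T2Space E] [IsTopologicalAddGroup E] [ContinuousSMul ℝ E] [LocallyConvexSpace ℝ E]
    {S : Set E} (hS : S.Finite) : {F | IsExposed ℝ (convexHull ℝ S) F}.Finite := by
  refine Set.Finite.of_finite_image (f := fun F => F.extremePoints ℝ)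
    (hS.finite_subsets.subset ?_) ?_
  · rintro _ ⟨F, hF, rfl⟩
    exact (hF.isExtreme.extremePoints_subset_extremePoints).trans extremePoints_convexHull_subset
  · have hull : ∀ F, IsExposed ℝ (convexHull ℝ S) F →
        closure (convexHull ℝ (F.extremePoints ℝ)) = F := fun F hF =>
      closure_convexHull_extremePoints (hF.isCompact (hS.isCompact_convexHull ℝ))
        (hF.convex (convex_convexHull ℝ S))
    intro F hF F' hF' h
    rw [← hull F hF, ← hull F' hF']
    exact congrArg (fun T => closure (convexHull ℝ T)) h

/-- The face of the edge polytope on which the weight `w` vanishes. -/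
def weightFace {n : ℕ} (G : SimpleGraph (Fin n)) (w : Fin n → ℝ) : Set (Fin n → ℝ) :=
  {x ∈ edgePolytope G | w ⬝ᵥ x = 0}

lemma isExposed_weightFace {n : ℕ} {G : SimpleGraph (Fin n)} {w : Fin n → ℝ}
    (hw : ∀ i j, G.Adj i j → 0 ≤ w i + w j) :
    IsExposed ℝ (edgePolytope G) (weightFace G w) := by
  rintro ⟨x₀, hx₀, h₀⟩
  refine ⟨LinearMap.toContinuousLinearMap (dotProductEquiv ℝ (Fin n) (-w)), ?_⟩
  ext x
  simp only [weightFace, mem_ofPred_eq, LinearMap.coe_toContinuousLinearMap',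
    dotProductEquiv_apply_apply, neg_dotProduct, neg_le_neg_iff]
  refine and_congr_right fun hx => ⟨fun h y hy => ?_, fun h => ?_⟩
  · rw [h]
    exact le_dotProduct_of_mem_edgePolytope hw hy
  · exact le_antisymm (h₀ ▸ h x₀ hx₀) (le_dotProduct_of_mem_edgePolytope hw hx)

/-- A vertex weight, nonnegative on edges, which is determined up to scaling by the edges on
which it vanishes. -/
structure IsFacetWeight {n : ℕ} (G : SimpleGraph (Fin n)) (w : Fin n → ℝ) : Prop where
  ne_zero : w ≠ 0
  nonneg : ∀ i j, G.Adj i j → 0 ≤ w i + w j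
  exists_tight : ∃ i j, G.Adj i j ∧ w i + w j = 0
  unique : ∀ y : Fin n → ℝ, (∀ i j, G.Adj i j → w i + w j = 0 → y i + y j = 0) → ∃ a : ℝ, y = a • w

namespace IsFacetWeight

variable {n : ℕ} {G : SimpleGraph (Fin n)} {w w' : Fin n → ℝ}

lemma edge_mem {i j : Fin n} (h : G.Adj i j) (hw : w i + w j = 0) :
    Pi.single i 1 + Pi.single j 1 ∈ weightFace G w :=
  ⟨edge_mem_edgePolytope h, by rw [dotProduct_edge, hw]⟩

lemma nonempty (hw : IsFacetWeight G w) : (weightFace G w).Nonempty := by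
  obtain ⟨i, j, h, h0⟩ := hw.exists_tight
  exact ⟨_, edge_mem h h0⟩

lemma polyDim_weightFace (hw : IsFacetWeight G w) : polyDim (weightFace G w) + 2 = n := by
  obtain ⟨i, j, hij, h0⟩ := hw.exists_tight
  have hli : LinearIndependent ℝ ![(1 : Fin n → ℝ), w] := by
    rw [LinearIndependent.pair_iff]
    intro s t hst
    have hi := congrFun hst i
    have hj := congrFun hst j
    simp only [Pi.add_apply, Pi.smul_apply, Pi.one_apply, smul_eq_mul, mul_one,
      Pi.zero_apply] at hi hj
    have hs : s = 0 := by linear_combination (hi + hj - t * h0) / 2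
    subst hs
    refine ⟨rfl, ?_⟩
    simpa [hw.ne_zero] using hst
  have hfin : Module.finrank ℝ (Submodule.span ℝ {(1 : Fin n → ℝ), w}) = 2 := by
    have := finrank_span_eq_card hli
    rwa [Matrix.range_cons_cons_empty, Fintype.card_fin] at this
  refine (congrArg _ hfin.symm).trans (polyDim_add_finrank_eq _ _ ?_)
  intro y
  rw [Submodule.mem_span_pair]
  constructor
  · rintro ⟨a, b, rfl⟩ x ⟨hx, hx0⟩ x' ⟨hx', hx0'⟩
    simp only [add_dotProduct, smul_dotProduct, hx0, hx0', one_dotProduct_of_mem_edgePolytope hx,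
      one_dotProduct_of_mem_edgePolytope hx']
  · intro hy
    obtain ⟨b, hb⟩ := hw.unique (y - ((y i + y j) / 2) • 1) (fun p q hpq h => by
      have := hy _ (edge_mem hpq h) _ (edge_mem hij h0)
      rw [dotProduct_edge, dotProduct_edge] at this
      simp only [Pi.sub_apply, Pi.smul_apply, Pi.one_apply, smul_eq_mul]
      linarith)
    exact ⟨(y i + y j) / 2, b, by rw [← hb]; simp⟩

lemma eq_smul_of_weightFace_eq (hw : IsFacetWeight G w) (h : weightFace G w = weightFace G w') :
    ∃ a : ℝ, w' = a • w := by
  refine hw.unique w' fun i j hij h0 => ?_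
  have := (h ▸ edge_mem hij h0 : _ ∈ weightFace G w').2
  rwa [dotProduct_edge] at this

end IsFacetWeight

/-- If only the zero weight has vanishing sums on all edges, then the edge polytope has codimension
one. -/
lemma polyDim_edgePolytope_add_one {n : ℕ} {G : SimpleGraph (Fin n)} {i j : Fin n}
    (hij : G.Adj i j)
    (hG : ∀ y : Fin n → ℝ, (∀ p q, G.Adj p q → y p + y q = 0) → y = 0) :
    polyDim (edgePolytope G) + 1 = n := by
  have hne : (1 : Fin n → ℝ) ≠ 0 := fun h => one_ne_zero (congrFun h i)
  refine (congrArg _ (finrank_span_singleton (K := ℝ) hne).symm).trans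
    (polyDim_add_finrank_eq _ _ ?_)
  intro y
  rw [Submodule.mem_span_singleton]
  constructor
  · rintro ⟨a, rfl⟩ x hx x' hx'
    simp only [smul_dotProduct, one_dotProduct_of_mem_edgePolytope hx,
      one_dotProduct_of_mem_edgePolytope hx']
  · intro hy
    refine ⟨(y i + y j) / 2, ?_⟩
    have := hG (y - ((y i + y j) / 2) • 1) (fun p q hpq => by
      have := hy _ (edge_mem_edgePolytope hpq) _ (edge_mem_edgePolytope hij)
      rw [dotProduct_edge, dotProduct_edge] at this
      simp only [Pi.sub_apply, Pi.smul_apply, Pi.one_apply, smul_eq_mul]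
      linarith)
    exact (sub_eq_zero.1 this).symm

lemma card_le_faceCount {n k : ℕ} (G : SimpleGraph (Fin n)) {ι : Type*}
    (F : ι → Set (Fin n → ℝ)) (hF : Function.Injective F)
    (h : ∀ a, IsExposed ℝ (edgePolytope G) (F a) ∧ (F a).Nonempty ∧ polyDim (F a) = k) :
    Nat.card ι ≤ faceCount (edgePolytope G) k := by
  rw [← Set.ncard_univ, ← Set.ncard_image_of_injective _ hF, image_univ]
  refine Set.ncard_le_ncard (range_subset_iff.2 h) ?_
  exact (finite_isExposed_convexHull (finite_edges G)).subset fun _ hx => hx.1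

/-- The cone over a disjoint union of cliques on consecutive triples of vertices (the last clique
may be smaller); the apex is the vertex `d`. -/
def cliqueCone (d : ℕ) : SimpleGraph (Fin (d + 1)) where
  Adj i j := i ≠ j ∧ (i.val = d ∨ j.val = d ∨ i.val / 3 = j.val / 3)
  symm := ⟨fun i j h => ⟨h.1.symm, by tauto⟩⟩
  loopless := ⟨fun i h => h.1 rfl⟩

/-- The weight on `cliqueCone d` selecting the vertex `3 * b + s b` of each triple `b`
(no vertex if `s b = 3`). -/
def selectionWeight (d : ℕ) (s : ℕ → ℕ) (i : Fin (d + 1)) : ℝ :=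
  if i.val = d then 1 else if s (i.val / 3) = 3 then 0
  else if i.val % 3 = s (i.val / 3) then -1 else 1

/-- The weight on `cliqueCone d` selecting the apex. -/
def apexWeight (d : ℕ) (i : Fin (d + 1)) : ℝ := if i.val = d then -1 else 1

lemma isFacetWeight_apexWeight {d : ℕ} (hd : 0 < d) :
    IsFacetWeight (cliqueCone d) (apexWeight d) where
  ne_zero h := by simpa [apexWeight] using congrFun h (Fin.last d)
  nonneg := by
    rintro i j ⟨hij, -⟩
    have : ¬ (i.val = d ∧ j.val = d) := fun h => hij (Fin.ext (h.1.trans h.2.symm))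
    unfold apexWeight
    split_ifs <;> first | (norm_num; done) | tauto
  exists_tight := ⟨Fin.last d, 0, ⟨fun h => by simpa [hd.ne'] using congrArg Fin.val h, by simp⟩,
    by simp [apexWeight, hd.ne]⟩
  unique y hy := by
    refine ⟨-y (Fin.last d), funext fun i => ?_⟩
    by_cases hi : i.val = d
    · obtain rfl : i = Fin.last d := Fin.ext hi
      simp [apexWeight]
    · have hne : Fin.last d ≠ i := fun h => hi (by rw [← h]; rfl)
      have := hy (Fin.last d) i ⟨hne, by simp⟩ (by simp [apexWeight, hi])
      simp only [apexWeight, hi, Pi.smul_apply, smul_eq_mul, if_false]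
      linarith

lemma isFacetWeight_selectionWeight {d : ℕ} (hd : 2 ≤ d) {s : ℕ → ℕ} (hs : ∀ b, s b ≤ 3)
    (hs' : ∀ b, d / 3 ≤ b → s b = 0) :
    IsFacetWeight (cliqueCone d) (selectionWeight d s) where
  ne_zero h := by simpa [selectionWeight] using congrFun h (Fin.last d)
  nonneg := by
    rintro i j ⟨hij, h⟩
    have hij' : i.val ≠ j.val := fun h => hij (Fin.ext h)
    unfold selectionWeight
    split_ifs <;> first | (norm_num; done) | (exfalso; grind)
  exists_tight := by
    by_cases h3 : s 0 = 3
    · have h0 : (0 : ℕ) ≠ d := by omega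
      have h1 : (1 : ℕ) ≠ d := by omega
      refine ⟨⟨0, by omega⟩, ⟨1, by omega⟩, ⟨by simp, by simp⟩, ?_⟩
      simp [selectionWeight, h0, h1, h3]
    · have hlt : s 0 < d := by
        rcases Nat.eq_zero_or_pos (d / 3) with h | h
        · rw [hs' 0 h.le]; omega
        · have := hs 0; omega
      have h0 := hs 0
      refine ⟨⟨s 0, by omega⟩, Fin.last d, ⟨fun h => hlt.ne (congrArg Fin.val h), by simp⟩, ?_⟩
      have hdiv : s 0 / 3 = 0 := by omega
      have hmod : s 0 % 3 = s 0 := by omega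
      simp [selectionWeight, hlt.ne, hdiv, hmod, h3]
  unique y hy := by
    refine ⟨y (Fin.last d), funext fun i => ?_⟩
    simp only [Pi.smul_apply, smul_eq_mul]
    by_cases hi : i.val = d
    · obtain rfl : i = Fin.last d := Fin.ext hi
      simp [selectionWeight]
    have hid : i.val < d := by omega
    have hsi := hs (i.val / 3)
    by_cases h3 : s (i.val / 3) = 3
    · have hb : i.val / 3 < d / 3 := by
        by_contra hcon
        have := hs' _ (not_lt.1 hcon)
        omega
      have zero : ∀ v : Fin (d + 1), v.val / 3 = i.val / 3 → selectionWeight d s v = 0 := by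
        intro v hv
        have : v.val ≠ d := by omega
        simp [selectionWeight, this, hv, h3]
      have key : ∀ v v' : Fin (d + 1), v ≠ v' → v.val / 3 = i.val / 3 → v'.val / 3 = i.val / 3 →
          y v + y v' = 0 := fun v v' hne hv hv' =>
        hy v v' ⟨hne, by omega⟩ (by rw [zero v hv, zero v' hv', add_zero])
      rw [zero i rfl, mul_zero]
      obtain ⟨p, q, hp, hq, hpi, hqi, hpq⟩ : ∃ p q : Fin (d + 1), p.val / 3 = i.val / 3 ∧
          q.val / 3 = i.val / 3 ∧ i ≠ p ∧ i ≠ q ∧ p ≠ q := by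
        refine ⟨⟨3 * (i.val / 3) + (i.val + 1) % 3, by omega⟩,
          ⟨3 * (i.val / 3) + (i.val + 2) % 3, by omega⟩, ?_, ?_, ?_, ?_, ?_⟩ <;>
        simp only [ne_eq, Fin.ext_iff] <;> omega
      linarith [key i p hpi rfl hp, key i q hqi rfl hq, key p q hpq hp hq]
    · obtain ⟨v, hv⟩ : ∃ v : Fin (d + 1), v.val = 3 * (i.val / 3) + s (i.val / 3) := by
        refine ⟨⟨3 * (i.val / 3) + s (i.val / 3), ?_⟩, rfl⟩
        rcases lt_or_ge (i.val / 3) (d / 3) with h | h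
        · omega
        · rw [hs' _ h]; omega
      have hvd : v.val < d := by
        rcases lt_or_ge (i.val / 3) (d / 3) with h | h
        · omega
        · rw [hs' _ h] at hv; omega
      have hvdiv : v.val / 3 = i.val / 3 := by omega
      have hvmod : v.val % 3 = s (i.val / 3) := by omega
      have hwv : selectionWeight d s v = -1 := by
        simp [selectionWeight, hvd.ne, hvdiv, hvmod, h3]
      have hyv : y v + y (Fin.last d) = 0 := by
        refine hy v (Fin.last d) ⟨fun h => hvd.ne (congrArg Fin.val h), by simp⟩ ?_
        rw [hwv]
        simp [selectionWeight]
      by_cases hiv : i = v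
      · rw [hiv, hwv]; linarith
      · have hmod : i.val % 3 ≠ s (i.val / 3) := fun h => hiv (Fin.ext (by omega))
        have hwi : selectionWeight d s i = 1 := by
          simp [selectionWeight, hi, h3, hmod]
        have := hy v i ⟨Ne.symm hiv, by omega⟩ (by rw [hwv, hwi]; norm_num)
        rw [hwi]; linarith

/-- Extend a choice on the full triples by selecting the first vertex of the remaining one. -/
def extendChoice {k : ℕ} (f : Fin k → Fin 4) (b : ℕ) : ℕ :=
  if h : b < k then (f ⟨b, h⟩).val else 0

lemma selectionWeight_extendChoice_injective (d : ℕ) :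
    Function.Injective fun f : Fin (d / 3) → Fin 4 => selectionWeight d (extendChoice f) := by
  have key : ∀ f g : Fin (d / 3) → Fin 4,
      selectionWeight d (extendChoice f) = selectionWeight d (extendChoice g) →
      ∀ b, (f b).val ≠ 3 → f b = g b := by
    intro f g hfg b hb
    have hfb := (f b).isLt
    have hbk := b.isLt
    have h := congrFun hfg ⟨3 * b.val + (f b).val, by omega⟩
    have hlt : 3 * b.val + (f b).val ≠ d := by omega
    have hdiv : (3 * b.val + (f b).val) / 3 = b.val := by omega
    have hmod : (3 * b.val + (f b).val) % 3 = (f b).val := by omega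
    simp only [selectionWeight, hlt, hdiv, hmod, extendChoice, hbk, hb, dif_pos, if_false,
      Fin.eta, if_true] at h
    split_ifs at h with h1 h2
    · norm_num at h
    · exact Fin.ext h2
    · norm_num at h
  intro f g hfg
  funext b
  by_cases hf : (f b).val = 3
  · by_cases hg : (g b).val = 3
    · exact Fin.ext (hf.trans hg.symm)
    · exact (key g f hfg.symm b hg).symm
  · exact key f g hfg b hf

/-- The facet weights of `cliqueCone d`: the apex weight and the selection weights. -/
def coneWeight (d : ℕ) : Option (Fin (d / 3) → Fin 4) → Fin (d + 1) → ℝ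
  | none => apexWeight d
  | some f => selectionWeight d (extendChoice f)

lemma isFacetWeight_coneWeight {d : ℕ} (hd : 2 ≤ d) (a : Option (Fin (d / 3) → Fin 4)) :
    IsFacetWeight (cliqueCone d) (coneWeight d a) := by
  cases a with
  | none => exact isFacetWeight_apexWeight (by omega)
  | some f =>
    refine isFacetWeight_selectionWeight hd (fun b => ?_) fun b hb => ?_
    · unfold extendChoice
      split_ifs <;> omega
    · simp [extendChoice, hb]

lemma not_selectionWeight_eq_smul_apexWeight {d : ℕ} (hd : 2 ≤ d) (s : ℕ → ℕ) (a : ℝ) :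
    selectionWeight d s ≠ a • apexWeight d := by
  intro h
  have hlast := congrFun h (Fin.last d)
  have h0 := congrFun h ⟨0, by omega⟩
  have h1 := congrFun h ⟨1, by omega⟩
  have hd0 : 0 ≠ d := by omega
  have hd1 : 1 ≠ d := by omega
  simp [selectionWeight, apexWeight, hd0, hd1] at hlast h0 h1
  obtain rfl : a = -1 := by linarith
  split_ifs at h0 h1 <;> first | (norm_num at h0; done) | (norm_num at h1; done) | omega

lemma weightFace_coneWeight_injective {d : ℕ} (hd : 2 ≤ d) :
    Function.Injective fun a => weightFace (cliqueCone d) (coneWeight d a) := by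
  intro a a' h
  cases a with
  | none =>
    cases a' with
    | none => rfl
    | some g =>
      obtain ⟨c, hc⟩ := (isFacetWeight_coneWeight hd none).eq_smul_of_weightFace_eq h
      exact absurd hc (not_selectionWeight_eq_smul_apexWeight hd _ c)
  | some f =>
    cases a' with
    | none =>
      obtain ⟨c, hc⟩ := (isFacetWeight_coneWeight hd none).eq_smul_of_weightFace_eq h.symm
      exact absurd hc (not_selectionWeight_eq_smul_apexWeight hd _ c)
    | some g =>
      obtain ⟨c, hc⟩ := (isFacetWeight_coneWeight hd (some f)).eq_smul_of_weightFace_eq h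
      have hlast := congrFun hc (Fin.last d)
      obtain rfl : c = 1 := by simpa [coneWeight, selectionWeight] using hlast.symm
      rw [one_smul] at hc
      exact congrArg some (selectionWeight_extendChoice_injective d hc.symm)

lemma cliqueCone_adj_last {d : ℕ} {i : Fin (d + 1)} (hi : i ≠ Fin.last d) :
    (cliqueCone d).Adj i (Fin.last d) := ⟨hi, by simp⟩

lemma cliqueCone_connected (d : ℕ) : (cliqueCone d).Connected := by
  refine (SimpleGraph.connected_iff_exists_forall_reachable _).2 ⟨Fin.last d, fun i => ?_⟩
  by_cases hi : i = Fin.last d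
  · rw [hi]
  · exact (cliqueCone_adj_last hi).symm.reachable

lemma polyDim_edgePolytope_cliqueCone {d : ℕ} (hd : 2 ≤ d) :
    polyDim (edgePolytope (cliqueCone d)) = d := by
  have h0 : (⟨0, by omega⟩ : Fin (d + 1)) ≠ Fin.last d := by simp [Fin.ext_iff]; omega
  have h1 : (⟨1, by omega⟩ : Fin (d + 1)) ≠ Fin.last d := by simp [Fin.ext_iff]; omega
  refine Nat.succ_injective (polyDim_edgePolytope_add_one (cliqueCone_adj_last h0) fun y hy => ?_)
  have e0 := hy _ _ (cliqueCone_adj_last h0)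
  have e1 := hy _ _ (cliqueCone_adj_last h1)
  have e01 := hy ⟨0, by omega⟩ ⟨1, by omega⟩ ⟨by simp, by simp⟩
  have hlast : y (Fin.last d) = 0 := by linarith
  funext i
  by_cases hi : i = Fin.last d
  · rw [hi, hlast]; rfl
  · have := hy _ _ (cliqueCone_adj_last hi)
    rw [hlast, add_zero] at this
    exact this

lemma edgePolytope_cliqueCone_many_facets {d : ℕ} (hd : 2 ≤ d) :
    4 ^ (d / 3) < faceCount (edgePolytope (cliqueCone d)) (d - 1) := by
  have h := card_le_faceCount (k := d - 1) (cliqueCone d) _ (weightFace_coneWeight_injective hd)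
    fun a => by
      have ha := isFacetWeight_coneWeight hd a
      have := ha.polyDim_weightFace
      exact ⟨isExposed_weightFace ha.nonneg, ha.nonempty, by omega⟩
  have hcard : Nat.card (Option (Fin (d / 3) → Fin 4)) = 4 ^ (d / 3) + 1 := by
    simp [Nat.card_eq_fintype_card]
  omega

lemma polyDim_singleton {n : ℕ} (x : Fin n → ℝ) : polyDim {x} = 0 := by
  rw [polyDim, vectorSpan_singleton, finrank_bot]

/-- The edge polytope of a path with two edges is a segment. -/
lemma edgePolytope_starGraph_fin_three :
    edgePolytope (SimpleGraph.starGraph (0 : Fin 3)) =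
      convexHull ℝ {![1, 1, 0], ![1, 0, 1]} := by
  have h1 : (![1, 1, 0] : Fin 3 → ℝ) = Pi.single 0 1 + Pi.single 1 1 := by
    ext v; fin_cases v <;> simp
  have h2 : (![1, 0, 1] : Fin 3 → ℝ) = Pi.single 0 1 + Pi.single 2 1 := by
    ext v; fin_cases v <;> simp
  rw [edgePolytope, h1, h2]
  congr 1
  ext x
  constructor
  · rintro ⟨i, j, hij, rfl⟩
    rw [SimpleGraph.starGraph_adj] at hij
    fin_cases i <;> fin_cases j <;> first
      | exact Or.inl rfl
      | exact Or.inr rfl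
      | exact Or.inl (add_comm _ _)
      | exact Or.inr (add_comm _ _)
      | simp at hij
  · rintro (rfl | rfl)
    · exact ⟨0, 1, by simp, rfl⟩
    · exact ⟨0, 2, by simp, rfl⟩

lemma polyDim_edgePolytope_starGraph_fin_three :
    polyDim (edgePolytope (SimpleGraph.starGraph (0 : Fin 3))) = 1 := by
  rw [edgePolytope_starGraph_fin_three, polyDim, ← direction_affineSpan, affineSpan_convexHull,
    direction_affineSpan, vectorSpan_pair]
  refine finrank_span_singleton fun h => ?_
  simpa using congrFun h 1

lemma isExposed_edgePolytope_starGraph_fin_three (b : Bool) :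
    IsExposed ℝ (edgePolytope (SimpleGraph.starGraph (0 : Fin 3)))
      {if b then ![1, 1, 0] else ![1, 0, 1]} := by
  have hface : weightFace (SimpleGraph.starGraph (0 : Fin 3)) (Pi.single (if b then 2 else 1) 1) =
      {if b then ![1, 1, 0] else ![1, 0, 1]} := by
    ext x
    rw [weightFace, edgePolytope_starGraph_fin_three, convexHull_pair]
    constructor
    · rintro ⟨⟨s, t, -, -, hst, rfl⟩, hx⟩
      cases b <;> simp at hx <;> subst hx <;> simp at hst <;> subst hst <;> simp
    · rintro rfl
      cases b
      · exact ⟨right_mem_segment ℝ _ _, by simp⟩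
      · exact ⟨left_mem_segment ℝ _ _, by simp⟩
  rw [← hface]
  refine isExposed_weightFace fun i j _ => ?_
  have hnn : (0 : Fin 3 → ℝ) ≤ Pi.single (if b then 2 else 1) 1 := Pi.single_nonneg.2 zero_le_one
  exact add_nonneg (hnn i) (hnn j)

lemma two_le_faceCount_edgePolytope_starGraph_fin_three :
    2 ≤ faceCount (edgePolytope (SimpleGraph.starGraph (0 : Fin 3))) 0 := by
  have h := card_le_faceCount (k := 0) (SimpleGraph.starGraph (0 : Fin 3))
    (fun b : Bool => {if b then ![1, 1, 0] else ![1, 0, 1]}) (fun b b' h => by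
      have := congrFun (Set.singleton_injective h) 1
      cases b <;> cases b' <;> simp_all)
    fun b => ⟨isExposed_edgePolytope_starGraph_fin_three b, Set.singleton_nonempty _,
      polyDim_singleton _⟩
  simpa using h

/-- For every `d > 0` there is a connected graph `G` (with no isolated vertices) whose
edge polytope has dimension `d` and more than `4 ^ ⌊d / 3⌋` facets (faces of dimension
`d - 1`). -/
theorem exists_edgePolytope_many_facets (d : ℕ) (hd : 0 < d) :
    ∃ (n : ℕ) (G : SimpleGraph (Fin n)), G.Connected ∧
      (∀ v : Fin n, ∃ w : Fin n, G.Adj v w) ∧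
      polyDim (edgePolytope G) = d ∧
      4 ^ (d / 3) < faceCount (edgePolytope G) (d - 1) := by
  rcases Nat.lt_or_ge d 2 with h | h
  · obtain rfl : d = 1 := by omega
    refine ⟨3, SimpleGraph.starGraph 0, SimpleGraph.connected_starGraph 0, fun v => ?_,
      polyDim_edgePolytope_starGraph_fin_three,
      two_le_faceCount_edgePolytope_starGraph_fin_three⟩
    by_cases hv : v = 0
    · exact ⟨1, by simp [hv]⟩
    · exact ⟨0, by simp [hv]⟩
  · refine ⟨d + 1, cliqueCone d, cliqueCone_connected d, fun v => ?_,
      polyDim_edgePolytope_cliqueCone h, edgePolytope_cliqueCone_many_facets h⟩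
    by_cases hv : v = Fin.last d
    · have h0 : (0 : Fin (d + 1)) ≠ Fin.last d := by simp [Fin.ext_iff]; omega
      exact ⟨0, hv ▸ (cliqueCone_adj_last h0).symm⟩
    · exact ⟨Fin.last d, cliqueCone_adj_last hv⟩
end
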